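/- There exists a constant c_p > 0 depending only on p such that if the initial curvature satisfies ψ̂(0) ≥ c_p·‖ψ‖₂, then for every l ∈ ℕ there is a constant C_{p,l} > 0 (depending only on p, l and ψ) such that the normalized curvature satisfies ‖k̃(·,τ) − 1‖_{C^l[0,2π]} ≤ C_{p,l}·e^{−(3p−1)τ} for all τ ≥ 0. -/

import Mathlib

open Real MeasureTheory Filter Set

/-- The `n`-th Fourier coefficient of a `2π`-periodic function `f : ℝ → ℝ`:
`f̂(n) = (1/2π) ∫₀^{2π} f(θ) e^{-inθ} dθ`. -/
noncomputable def fCoeff (f : ℝ → ℝ) (n : ℤ) : ℂ :=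
  (1 / (2 * Real.pi)) * ∫ θ in (0:ℝ)..(2 * Real.pi),
    (f θ : ℂ) * Complex.exp (-(Complex.I * n * θ))

/-- The seminorm `‖f‖₂ = max{sup_n n²|Re f̂(n)|, sup_n n²|Im f̂(n)|}`. -/
noncomputable def seminorm2 (f : ℝ → ℝ) : ℝ :=
  max (⨆ n : ℤ, (n : ℝ)^2 * |(fCoeff f n).re|)
      (⨆ n : ℤ, (n : ℝ)^2 * |(fCoeff f n).im|)

/-- The `C^l[0,2π]` norm: `max_{0 ≤ j ≤ l} sup_{θ ∈ [0,2π]} |f^{(j)}(θ)|`. -/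
noncomputable def ClNorm (l : ℕ) (f : ℝ → ℝ) : ℝ :=
  ⨆ j : Fin (l + 1), ⨆ θ : Set.Icc (0:ℝ) (2 * Real.pi),
    |iteratedDeriv (j : ℕ) f (θ : ℝ)|

/-- `k : ℝ × [0,T) → ℝ` is a smooth, `2π`-periodic (in space), strictly positive solution of the
`p`-curve shortening equation
`∂k/∂t = k²(k^{p-1} ∂²k/∂θ² + (p-1) k^{p-2} (∂k/∂θ)² + (1/p) k^p)`
with initial datum `ψ` (smooth, strictly positive, `2π`-periodic), blow-up time `T`
(i.e. `sup_θ k(θ,t) → ∞` as `t → T⁻`), such that `k(·,t)` is the curvature of a simple closed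
convex curve for each `t`, i.e. `∫₀^{2π} e^{iθ}/k(θ,t) dθ = 0`. -/
def IsPCSF (p : ℕ) (T : ℝ) (k : ℝ → ℝ → ℝ) (ψ : ℝ → ℝ) : Prop :=
  ContDiffOn ℝ (⊤ : ℕ∞) (fun q : ℝ × ℝ => k q.1 q.2) (Set.univ ×ˢ Set.Ico 0 T) ∧
  (∀ θ t, k (θ + 2 * Real.pi) t = k θ t) ∧
  (∀ θ : ℝ, ∀ t ∈ Set.Ico (0:ℝ) T, 0 < k θ t) ∧
  (∀ θ : ℝ, ∀ t ∈ Set.Ico (0:ℝ) T,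
    HasDerivAt (fun s => k θ s)
      ((k θ t)^2 * ((k θ t)^(p - 1) * deriv (deriv (fun x => k x t)) θ
        + ((p : ℝ) - 1) * (k θ t)^(p - 2) * (deriv (fun x => k x t) θ)^2
        + (1 / (p : ℝ)) * (k θ t)^p)) t) ∧
  (∀ θ, k θ 0 = ψ θ) ∧
  ContDiff ℝ (⊤ : ℕ∞) ψ ∧ (∀ θ, 0 < ψ θ) ∧ (∀ θ, ψ (θ + 2 * Real.pi) = ψ θ) ∧
  Filter.Tendsto (fun t => ⨆ θ : Set.Icc (0:ℝ) (2 * Real.pi), k (θ : ℝ) t)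
    (nhdsWithin T (Set.Iio T)) Filter.atTop ∧
  (∀ t ∈ Set.Ico (0:ℝ) T,
    (∫ θ in (0:ℝ)..(2 * Real.pi), Complex.exp (Complex.I * θ) / (k θ t)) = 0)

/-- The original time `t` corresponding to the rescaled time `τ`:
`t = T(1 - e^{-(p+1)τ})`, i.e. `τ = -(1/(p+1))·log(1 - t/T)`. -/
noncomputable def tOf (p : ℕ) (T τ : ℝ) : ℝ := T * (1 - Real.exp (-((p : ℝ) + 1) * τ))

/-- The normalized curvature `k̃(θ,τ) = ((p+1)/p)^{1/(p+1)} (T-t)^{1/(p+1)} k(θ,t)`,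
with `t = T(1 - e^{-(p+1)τ})`. -/
noncomputable def ktilde (p : ℕ) (T : ℝ) (k : ℝ → ℝ → ℝ) (θ τ : ℝ) : ℝ :=
  (((p : ℝ) + 1) / (p : ℝ)) ^ ((1 : ℝ) / ((p : ℝ) + 1))
    * (T - tOf p T τ) ^ ((1 : ℝ) / ((p : ℝ) + 1)) * k θ (tOf p T τ)



/-- smooth and periodic -/
def SP (f : ℝ → ℝ) : Prop := ContDiff ℝ (⊤ : ℕ∞) f ∧ ∀ x, f (x + 2 * Real.pi) = f x

/-- the weight max(1,|n|) -/
noncomputable def jb (n : ℤ) : ℝ := max 1 |(n : ℝ)|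

def Bd (m : ℕ) (f : ℝ → ℝ) (A : ℝ) : Prop := ∀ n : ℤ, jb n ^ m * ‖fCoeff f n‖ ≤ A

theorem jb_one_le (n : ℤ) : 1 ≤ jb n := le_max_left _ _
theorem jb_pos (n : ℤ) : 0 < jb n := lt_of_lt_of_le one_pos (jb_one_le n)

theorem SP.cont {f : ℝ → ℝ} (hf : SP f) : Continuous f := hf.1.continuous

theorem SP.deriv {f : ℝ → ℝ} (hf : SP f) : SP (deriv f) := by
  refine ⟨?_, fun x => ?_⟩
  · exact ((contDiff_infty_iff_deriv (𝕜 := ℝ)).1 hf.1).2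
  · have h : (fun x => f (x + 2 * Real.pi)) = f := funext hf.2
    conv_rhs => rw [← h]
    rw [deriv_comp_add_const]

theorem SP.iter {f : ℝ → ℝ} (hf : SP f) (m : ℕ) : SP (iteratedDeriv m f) := by
  induction m with
  | zero => simpa using hf
  | succ k ih => rw [iteratedDeriv_succ]; exact ih.deriv

theorem SP.const (c : ℝ) : SP (fun _ => c) := ⟨contDiff_const, fun _ => rfl⟩
theorem SP.add {f g : ℝ → ℝ} (hf : SP f) (hg : SP g) : SP (fun x => f x + g x) :=
  ⟨hf.1.add hg.1, fun x => by simp only [hf.2, hg.2]⟩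
theorem SP.mul {f g : ℝ → ℝ} (hf : SP f) (hg : SP g) : SP (fun x => f x * g x) :=
  ⟨hf.1.mul hg.1, fun x => by simp only [hf.2, hg.2]⟩
theorem SP.pow {f : ℝ → ℝ} (hf : SP f) (p : ℕ) : SP (fun x => f x ^ p) :=
  ⟨hf.1.pow p, fun x => by simp only [hf.2]⟩
theorem SP.inv {f : ℝ → ℝ} (hf : SP f) (h : ∀ x, f x ≠ 0) : SP (fun x => (f x)⁻¹) :=
  ⟨hf.1.inv h, fun x => by simp only [hf.2]⟩

theorem fC_int {f : ℝ → ℝ} (hf : Continuous f) (n : ℤ) (a b : ℝ) : IntervalIntegrable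
    (fun θ : ℝ => (f θ : ℂ) * Complex.exp (-(Complex.I * n * θ))) volume a b :=
  Continuous.intervalIntegrable (by fun_prop) _ _

theorem fCoeff_add {f g : ℝ → ℝ} (hf : Continuous f) (hg : Continuous g) (n : ℤ) :
    fCoeff (fun x => f x + g x) n = fCoeff f n + fCoeff g n := by
  unfold fCoeff
  rw [← mul_add, ← intervalIntegral.integral_add (fC_int hf n _ _) (fC_int hg n _ _)]
  congr 2; ext θ; push_cast; ring

theorem fCoeff_smul (c : ℝ) (f : ℝ → ℝ) (n : ℤ) :
    fCoeff (fun x => c * f x) n = c * fCoeff f n := by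
  unfold fCoeff
  rw [mul_left_comm]
  rw [← intervalIntegral.integral_const_mul (c : ℂ)]
  congr 2; ext θ; push_cast; ring

theorem fCoeff_deriv {f : ℝ → ℝ} (hf : SP f) (n : ℤ) :
    fCoeff (deriv f) n = Complex.I * n * fCoeff f n := by
  unfold fCoeff
  have hd : ∀ x, HasDerivAt f (deriv f x) x := fun x =>
    ((hf.1.differentiable (by simp)) x).hasDerivAt
  have h := intervalIntegral.integral_mul_deriv_eq_deriv_mul (a := 0) (b := 2 * Real.pi)
    (u := fun θ : ℝ => Complex.exp (-(Complex.I * n * θ)))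
    (u' := fun θ : ℝ => Complex.exp (-(Complex.I * n * θ)) * (-(Complex.I * n)))
    (v := fun θ : ℝ => (f θ : ℂ)) (v' := fun θ : ℝ => ((deriv f θ : ℝ) : ℂ))
    (fun x _ => by
      have : HasDerivAt (fun θ : ℝ => -(Complex.I * n * (θ:ℂ))) (-(Complex.I * n)) x := by
        have := (((hasDerivAt_id x).ofReal_comp).const_mul (Complex.I * n)).neg
        simp only [Complex.ofReal_one, mul_one, id] at this
        exact this
      exact this.cexp)
    (fun x _ => (hd x).ofReal_comp)
    (Continuous.intervalIntegrable (by fun_prop) _ _)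
    (Continuous.intervalIntegrable (by have := hf.deriv.cont; fun_prop) _ _)
  have e1 : Complex.exp (-(Complex.I * n * ((2 * Real.pi : ℝ) : ℂ))) = 1 := by
    have : -(Complex.I * n * ((2 * Real.pi : ℝ) : ℂ)) = ((-n : ℤ) : ℂ) * (2 * Real.pi * Complex.I) := by
      push_cast; ring
    rw [this, Complex.exp_int_mul_two_pi_mul_I]
  have e2 : f (2 * Real.pi) = f 0 := by simpa using hf.2 0
  rw [e1, e2] at h
  simp only [Complex.ofReal_zero, mul_zero, neg_zero, Complex.exp_zero, sub_self, zero_sub] at h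
  rw [mul_left_comm, ← intervalIntegral.integral_const_mul (Complex.I * n)]
  congr 1
  rw [show (∫ θ in (0:ℝ)..(2 * Real.pi), ((deriv f θ : ℝ) : ℂ) * Complex.exp (-(Complex.I * n * θ)))
    = ∫ θ in (0:ℝ)..(2 * Real.pi), Complex.exp (-(Complex.I * n * θ)) * ((deriv f θ : ℝ) : ℂ) by
      congr 1; ext θ; ring]
  rw [h, ← intervalIntegral.integral_neg]
  congr 1; ext θ; ring

theorem fCoeff_iter {f : ℝ → ℝ} (hf : SP f) (m : ℕ) (n : ℤ) :
    fCoeff (iteratedDeriv m f) n = (Complex.I * n) ^ m * fCoeff f n := by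
  induction m with
  | zero => simp
  | succ k ih => rw [iteratedDeriv_succ, fCoeff_deriv (hf.iter k), ih]; ring

theorem fCoeff_norm_le {f : ℝ → ℝ} {A : ℝ} (h : ∀ x, |f x| ≤ A) (n : ℤ) : ‖fCoeff f n‖ ≤ A := by
  unfold fCoeff
  have hp := Real.pi_pos
  have := intervalIntegral.norm_integral_le_of_norm_le_const (a := 0) (b := 2 * Real.pi) (C := A)
    (f := fun θ : ℝ => (f θ : ℂ) * Complex.exp (-(Complex.I * n * θ))) (fun x _ => by
      rw [norm_mul, show -(Complex.I * n * (x:ℂ)) = ((-(n * x) : ℝ) : ℂ) * Complex.I by push_cast; ring,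
        Complex.norm_exp_ofReal_mul_I, mul_one, Complex.norm_real]
      exact h x)
  rw [norm_mul]
  have e : ‖(1 / (2 * Real.pi) : ℂ)‖ = 1 / (2 * Real.pi) := by
    rw [show (1 / (2 * Real.pi) : ℂ) = ((1 / (2 * Real.pi) : ℝ) : ℂ) by push_cast; rfl,
      Complex.norm_real, Real.norm_of_nonneg (by positivity)]
  rw [e, sub_zero, abs_of_pos (by positivity)] at *
  calc _ ≤ 1 / (2 * Real.pi) * (A * (2 * Real.pi)) := by gcongr
    _ = A := by field_simp

theorem SP.bounded {f : ℝ → ℝ} (hf : SP f) : ∃ A, ∀ x, |f x| ≤ A := by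
  obtain ⟨A, hA⟩ := (isCompact_Icc (a := (0:ℝ)) (b := 2 * Real.pi)).exists_bound_of_continuousOn
    hf.cont.continuousOn
  refine ⟨A, fun x => ?_⟩
  obtain ⟨y, hy, e⟩ := Function.Periodic.exists_mem_Ico₀ (f := f) (c := 2 * Real.pi) hf.2
    (by positivity) x
  rw [e]; exact hA y ⟨hy.1, hy.2.le⟩

theorem Bd_of_bounds {f : ℝ → ℝ} (hf : SP f) (m : ℕ) {A : ℝ} (h0 : ∀ x, |f x| ≤ A)
    (hm : ∀ x, |iteratedDeriv m f x| ≤ A) : Bd m f A := by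
  intro n
  by_cases hn : n = 0
  · subst hn; simpa [jb] using fCoeff_norm_le h0 0
  · have h1 : (1:ℝ) ≤ |(n:ℝ)| := by
      have := Int.one_le_abs hn
      exact_mod_cast this
    have := fCoeff_norm_le hm n
    rw [fCoeff_iter hf, norm_mul, norm_pow, norm_mul, Complex.norm_I, one_mul, Complex.norm_intCast] at this
    rwa [jb, max_eq_right h1]

theorem SP.exists_Bd {f : ℝ → ℝ} (hf : SP f) (m : ℕ) : ∃ A, 0 < A ∧ Bd m f A := by
  obtain ⟨A, hA⟩ := hf.bounded
  obtain ⟨B, hB⟩ := (hf.iter m).bounded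
  refine ⟨max 1 (max A B), by positivity, Bd_of_bounds hf m (fun x => (hA x).trans ?_) (fun x => (hB x).trans ?_)⟩ <;> simp

theorem summable_jb : Summable (fun n : ℤ => 1 / jb n ^ 2) := by
  have : Summable (fun n : ℤ => 1 / (n:ℝ) ^ 2) := Real.summable_one_div_int_pow.2 (by norm_num)
  refine (this.add (summable_of_ne_finset_zero (f := fun n : ℤ => if n = 0 then (1:ℝ) else 0) (s := {0}) (by intro b hb; simpa using hb))).of_nonneg_of_le (fun n => by have := jb_pos n; positivity) fun n => ?_
  by_cases hn : n = 0
  · subst hn; simp [jb]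
  · have h1 : (1:ℝ) ≤ |(n:ℝ)| := by
      have := Int.one_le_abs hn
      exact_mod_cast this
    rw [jb, max_eq_right h1]; simp [hn]

noncomputable def Z0 : ℝ := ∑' n : ℤ, 1 / jb n ^ 2

theorem Z0_one_le : 1 ≤ Z0 := by
  have := summable_jb.le_tsum 0 (fun n _ => by have := jb_pos n; positivity)
  simpa [jb, Z0] using this

theorem Bd.norm_le {m : ℕ} {f : ℝ → ℝ} {A : ℝ} (h : Bd m f A) (n : ℤ) : ‖fCoeff f n‖ ≤ A / jb n ^ m := by
  rw [le_div_iff₀ (pow_pos (jb_pos n) m), mul_comm]; exact h n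

theorem Bd.nonneg {m : ℕ} {f : ℝ → ℝ} {A : ℝ} (h : Bd m f A) : 0 ≤ A :=
  le_trans (by have := jb_pos 0; positivity) (h 0)

theorem Bd.summable {f : ℝ → ℝ} {A : ℝ} (h : Bd 2 f A) : Summable (fun n => ‖fCoeff f n‖) :=
  (summable_jb.mul_left A).of_nonneg_of_le (fun _ => norm_nonneg _) fun n => by
    simpa [div_eq_mul_inv] using h.norm_le n

theorem inversion {f : ℝ → ℝ} (hf : SP f) (x : ℝ) :
    HasSum (fun n : ℤ => fCoeff f n * Complex.exp (Complex.I * n * x)) (f x : ℂ) := by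
  have : Fact (0 < 2 * Real.pi) := ⟨by positivity⟩
  have hper : Function.Periodic (fun x => (f x : ℂ)) (2 * Real.pi) := fun x => by simp [hf.2]
  let F : C(AddCircle (2 * Real.pi), ℂ) := ⟨hper.lift, by
    refine continuous_coinduced_dom.2 ?_
    exact Complex.continuous_ofReal.comp hf.cont⟩
  have hF : ∀ x : ℝ, F x = (f x : ℂ) := fun x => hper.lift_coe x
  have hc : ∀ n, fourierCoeff F n = fCoeff f n := by
    intro n
    rw [fourierCoeff_eq_intervalIntegral _ _ 0, zero_add, fCoeff]
    rw [Complex.real_smul]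
    push_cast
    congr 2
    ext θ
    rw [hF, fourier_coe_apply, smul_eq_mul, mul_comm]
    congr 2
    have := Real.pi_ne_zero
    push_cast
    field_simp
  obtain ⟨A, -, hA⟩ := hf.exists_Bd 2
  have hs : Summable (fourierCoeff F) := by
    have : Summable (fun n => fCoeff f n) := hA.summable.of_norm
    convert this using 1
    exact funext hc
  have := has_pointwise_sum_fourier_series_of_summable hs (x : AddCircle (2 * Real.pi))
  rw [hF] at this
  convert this using 2 with n
  rw [hc, smul_eq_mul, fourier_coe_apply]
  congr 2
  have := Real.pi_ne_zero
  push_cast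
  field_simp

theorem norm_ex (n : ℤ) (x : ℝ) : ‖Complex.exp (Complex.I * n * x)‖ = 1 := by
  rw [show Complex.I * n * (x:ℂ) = ((n * x : ℝ) : ℂ) * Complex.I by push_cast; ring,
        Complex.norm_exp_ofReal_mul_I]

theorem sup_leZ {f : ℝ → ℝ} (hf : SP f) {A : ℝ} (h : Bd 2 f A) (x : ℝ) : |f x| ≤ A * Z0 := by
  have h1 := inversion hf x
  have h2 := tsum_of_norm_bounded (f := fun n : ℤ => fCoeff f n * Complex.exp (Complex.I * n * x))
    (g := fun n => A * (1 / jb n ^ 2)) (a := A * Z0) (summable_jb.hasSum.mul_left A)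
    (fun n => by rw [norm_mul, norm_ex, mul_one]; simpa [div_eq_mul_inv] using h.norm_le n)
  rwa [h1.tsum_eq, Complex.norm_real] at h2

theorem HasSum.congr_fun' {f g : ℤ → ℂ} {a b : ℂ} (h : HasSum g b) (h1 : ∀ j, f j = g j)
    (h2 : a = b) : HasSum f a := by
  rw [h2, funext h1]; exact h

theorem conv_hasSum {f g : ℝ → ℝ} (hf : SP f) (hg : SP g) (n : ℤ) :
    HasSum (fun j : ℤ => fCoeff f j * fCoeff g (n - j)) (fCoeff (fun x => f x * g x) n) := by
  obtain ⟨A, -, hA⟩ := hf.exists_Bd 2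
  obtain ⟨B, hB⟩ := hg.bounded
  have key := intervalIntegral.hasSum_integral_of_dominated_convergence (μ := volume)
    (a := 0) (b := 2 * Real.pi)
    (F := fun (j : ℤ) (θ : ℝ) => (fCoeff f j * Complex.exp (Complex.I * j * θ)) *
      ((g θ : ℂ) * Complex.exp (-(Complex.I * n * θ))))
    (f := fun θ : ℝ => (f θ : ℂ) * ((g θ : ℂ) * Complex.exp (-(Complex.I * n * θ))))
    (fun j _ => ‖fCoeff f j‖ * B)
    (fun j => Continuous.aestronglyMeasurable (by have := hg.cont; fun_prop))
    (fun j => ae_of_all _ fun θ _ => by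
      rw [norm_mul, norm_mul, norm_mul, norm_ex, mul_one,
        show -(Complex.I * n * (θ:ℂ)) = Complex.I * ((-n:ℤ):ℂ) * θ by push_cast; ring, norm_ex, mul_one,
        Complex.norm_real]
      gcongr; exact hB θ)
    (ae_of_all _ fun θ _ => hA.summable.mul_right B)
    intervalIntegrable_const
    (ae_of_all _ fun θ _ => (inversion hf θ).mul_right _)
  have key2 := key.mul_left ((1:ℂ) / (2 * Real.pi))
  refine (HasSum.congr_fun' key2 ?_ ?_)
  · intro j
    rw [show (∫ θ in (0:ℝ)..(2*Real.pi), (fCoeff f j * Complex.exp (Complex.I * j * θ)) *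
      ((g θ : ℂ) * Complex.exp (-(Complex.I * n * θ)))) = fCoeff f j * ∫ θ in (0:ℝ)..(2*Real.pi), (g θ : ℂ) * Complex.exp (-(Complex.I * ((n - j : ℤ):ℂ) * θ)) by
        rw [← intervalIntegral.integral_const_mul]
        congr 1; ext θ
        rw [show -(Complex.I * ((n - j : ℤ):ℂ) * θ) = Complex.I * j * θ + -(Complex.I * n * θ) by push_cast; ring, Complex.exp_add]
        ring]
    rw [fCoeff, fCoeff]; ring
  · rw [fCoeff]; congr 2; ext θ; push_cast; ring

theorem jb_le_add (n j : ℤ) : jb n ≤ jb j + jb (n - j) := by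
  have h1 := jb_one_le j
  have h2 := jb_one_le (n - j)
  refine max_le (by linarith) ?_
  have : |(n:ℝ)| ≤ |(j:ℝ)| + |((n - j : ℤ):ℝ)| := by
    have := abs_add_le (j:ℝ) ((n - j : ℤ):ℝ)
    push_cast at *
    rwa [add_sub_cancel] at this
  exact this.trans (add_le_add (le_max_right _ _) (le_max_right _ _))

theorem Bd_mul {m : ℕ} {f g : ℝ → ℝ} (hf : SP f) (hg : SP g) {a A b B : ℝ}
    (ha : Bd 2 f a) (hA : Bd m f A) (hb : Bd 2 g b) (hB : Bd m g B) :
    Bd m (fun x => f x * g x) (2 ^ m * Z0 * (A * b + a * B)) := by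
  intro n
  have h1 := conv_hasSum hf hg n
  have s2 : HasSum (fun j : ℤ => 1 / jb (n - j) ^ 2) Z0 := by
    have := (Equiv.subLeft n).hasSum_iff.2 summable_jb.hasSum
    exact this
  have s1 : HasSum (fun j : ℤ => 1 / jb j ^ 2) Z0 := summable_jb.hasSum
  have h2 := tsum_of_norm_bounded (f := fun j : ℤ => (jb n ^ m : ℝ) * (fCoeff f j * fCoeff g (n - j)))
    (g := fun j => 2 ^ m * (A * b * (1 / jb (n - j) ^ 2) + a * B * (1 / jb j ^ 2)))
    (((s2.mul_left (A * b)).add (s1.mul_left (a * B))).mul_left (2 ^ m))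
    (fun j => by
      have p0 := jb_pos j
      have p1 := jb_pos (n - j)
      have p2 := jb_pos n
      rw [norm_mul, norm_mul, Complex.norm_real, Real.norm_of_nonneg (by positivity)]
      have e1 : jb n ^ m ≤ 2 ^ m * (jb j ^ m + jb (n - j) ^ m) := by
        rcases le_total (jb j) (jb (n - j)) with h | h
        · calc jb n ^ m ≤ (2 * jb (n - j)) ^ m := by
                gcongr; linarith [jb_le_add n j]
            _ = 2 ^ m * jb (n - j) ^ m := by rw [mul_pow]
            _ ≤ _ := by gcongr; linarith [pow_pos p0 m]
        · calc jb n ^ m ≤ (2 * jb j) ^ m := by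
                gcongr; linarith [jb_le_add n j]
            _ = 2 ^ m * jb j ^ m := by rw [mul_pow]
            _ ≤ _ := by gcongr; linarith [pow_pos p1 m]
      have q1 := hA j
      have q2 := hb.norm_le (n - j)
      have q3 := ha.norm_le j
      have q4 := hB (n - j)
      calc jb n ^ m * (‖fCoeff f j‖ * ‖fCoeff g (n - j)‖)
          ≤ 2 ^ m * (jb j ^ m + jb (n - j) ^ m) * (‖fCoeff f j‖ * ‖fCoeff g (n - j)‖) := by gcongr
        _ = 2 ^ m * ((jb j ^ m * ‖fCoeff f j‖) * ‖fCoeff g (n - j)‖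
              + ‖fCoeff f j‖ * (jb (n - j) ^ m * ‖fCoeff g (n - j)‖)) := by ring
        _ ≤ 2 ^ m * (A * (b / jb (n - j) ^ 2) + (a / jb j ^ 2) * B) := by
            have := hA.nonneg
            have := hB.nonneg
            have := ha.nonneg
            gcongr
        _ = _ := by ring)
  have h3 := h1.mul_left ((jb n ^ m : ℝ) : ℂ)
  rw [h3.tsum_eq, norm_mul, Complex.norm_real, Real.norm_of_nonneg (by have := jb_pos n; positivity)] at h2
  refine h2.trans (le_of_eq (by ring))


theorem Bd.mono {m : ℕ} {f : ℝ → ℝ} {A B : ℝ} (h : Bd m f A) (hAB : A ≤ B) : Bd m f B :=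
  fun n => (h n).trans hAB

theorem Bd.low {m k : ℕ} {f : ℝ → ℝ} {A : ℝ} (h : Bd m f A) (hk : k ≤ m) : Bd k f A := fun n =>
  le_trans (mul_le_mul_of_nonneg_right (pow_le_pow_right₀ (jb_one_le n) hk) (norm_nonneg _)) (h n)

theorem Bd.add {m : ℕ} {f g : ℝ → ℝ} (hf : SP f) (hg : SP g) {A B : ℝ} (hA : Bd m f A) (hB : Bd m g B) :
    Bd m (fun x => f x + g x) (A + B) := by
  intro n
  rw [fCoeff_add hf.cont hg.cont]
  calc _ ≤ jb n ^ m * (‖fCoeff f n‖ + ‖fCoeff g n‖) := by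
        have := jb_pos n
        gcongr; exact norm_add_le _ _
    _ ≤ _ := by rw [mul_add]; exact add_le_add (hA n) (hB n)

theorem Bd.smul {m : ℕ} {f : ℝ → ℝ} {A : ℝ} (hA : Bd m f A) (c : ℝ) :
    Bd m (fun x => c * f x) (|c| * A) := by
  intro n
  rw [fCoeff_smul, norm_mul, Complex.norm_real, mul_left_comm]
  exact mul_le_mul_of_nonneg_left (hA n) (abs_nonneg c)

theorem absorb {m : ℕ} {g : ℝ → ℝ} {A : ℝ} (hg : SP g)
    (h : ∀ B, Bd m g B → Bd m g (A + B / 2)) : Bd m g (2 * A) := by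
  obtain ⟨B, -, hB⟩ := hg.exists_Bd m
  have hb : BddAbove (Set.range fun n : ℤ => jb n ^ m * ‖fCoeff g n‖) := ⟨B, by
    rintro _ ⟨n, rfl⟩; exact hB n⟩
  have h1 : Bd m g (⨆ n : ℤ, jb n ^ m * ‖fCoeff g n‖) := fun n => le_ciSup hb n
  have h2 : (⨆ n : ℤ, jb n ^ m * ‖fCoeff g n‖) ≤ _ := ciSup_le (h _ h1)
  exact h1.mono (by linarith)

noncomputable def KK (m : ℕ) : ℝ := 2 ^ m * Z0

theorem KK_one_le (m : ℕ) : 1 ≤ KK m := by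
  unfold KK
  nlinarith [Z0_one_le, one_le_pow₀ (n := m) (one_le_two (α := ℝ))]

theorem KK_mono {k m : ℕ} (h : k ≤ m) : KK k ≤ KK m := by
  unfold KK
  exact mul_le_mul_of_nonneg_right (pow_le_pow_right₀ one_le_two h) (by linarith [Z0_one_le])

theorem inv_eq {f g : ℝ → ℝ} (h : ∀ x, (1 + f x) * (1 + g x) = 1) :
    g = fun x => (-1) * f x + (-1) * (f x * g x) := by
  ext x; linarith [h x]

theorem SP.smul {f : ℝ → ℝ} (hf : SP f) (c : ℝ) : SP (fun x => c * f x) := (SP.const c).mul hf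

theorem inv2 {f g : ℝ → ℝ} (hf : SP f) (hg : SP g) (h : ∀ x, (1 + f x) * (1 + g x) = 1)
    {a : ℝ} (ha : Bd 2 f a) (hs : 4 * KK 2 * a ≤ 1) : Bd 2 g (2 * a) := by
  refine absorb hg fun b hb => ?_
  have h1 := Bd.add (hf.smul (-1)) ((hf.mul hg).smul (-1)) (ha.smul (-1)) ((Bd_mul hf hg ha ha hb hb).smul (-1))
  rw [← inv_eq h] at h1
  refine h1.mono ?_
  have := hb.nonneg
  simp only [abs_neg, abs_one, one_mul]
  change a + KK 2 * (a * b + a * b) ≤ _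
  nlinarith

theorem invm {m : ℕ} (hm : 2 ≤ m) {f g : ℝ → ℝ} (hf : SP f) (hg : SP g) (h : ∀ x, (1 + f x) * (1 + g x) = 1)
    {a A : ℝ} (ha : Bd 2 f a) (hA : Bd m f A) (hs : 4 * KK m * a ≤ 1) : Bd m g (4 * A) := by
  have h2 : 4 * KK 2 * a ≤ 1 := le_trans (by have := ha.nonneg; gcongr; exact KK_mono hm) hs
  have hb := inv2 hf hg h ha h2
  rw [show 4 * A = 2 * (2 * A) by ring]
  refine absorb hg fun B hB => ?_
  have h1 := Bd.add (hf.smul (-1)) ((hf.mul hg).smul (-1)) (hA.smul (-1)) ((Bd_mul hf hg ha hA hb hB).smul (-1))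
  rw [← inv_eq h] at h1
  refine h1.mono ?_
  have := hB.nonneg
  have := hA.nonneg
  simp only [abs_neg, abs_one, one_mul]
  change A + KK m * (A * (2 * a) + a * B) ≤ _
  nlinarith

def Nf (p : ℕ) (u y : ℝ → ℝ) : ℝ → ℝ := fun x => (1 + y x) ^ p - 1 + p * u x

theorem Nf_SP {p : ℕ} {u y : ℝ → ℝ} (hu : SP u) (hy : SP y) : SP (Nf p u y) := by
  have := ((((SP.const 1).add hy).pow p).add (SP.const (-1))).add (hu.smul (p:ℝ))
  convert this using 1
  ext x; simp [Nf, sub_eq_add_neg]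

theorem Nf_Bd (m : ℕ) (hm : 2 ≤ m) (p : ℕ) : ∃ C : ℝ, 0 ≤ C ∧ ∀ (u y : ℝ → ℝ), SP u → SP y →
    (∀ x, (1 + u x) * (1 + y x) = 1) → ∀ a A : ℝ, Bd 2 u a → Bd m u A → 4 * KK m * a ≤ 1 →
    Bd 2 (Nf p u y) (C * a * a) ∧ Bd m (Nf p u y) (C * a * A) := by
  induction p with
  | zero =>
    refine ⟨0, le_rfl, fun u y hu hy h a A ha hA hs => ?_⟩
    have : Nf 0 u y = fun x => 0 := by ext x; simp [Nf]
    rw [this]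
    constructor <;> intro n <;> simp [fCoeff]
  | succ j ih =>
    obtain ⟨C, hC, ih⟩ := ih
    have hK := KK_one_le m
    have hK2 := KK_one_le 2
    have hKm := KK_mono hm
    refine ⟨C + 6 * KK m * (j + C) + 6 * KK m, by positivity, fun u y hu hy h a A ha hA hs => ?_⟩
    obtain ⟨i2, im⟩ := ih u y hu hy h a A ha hA hs
    have a0 := ha.nonneg
    have A0 := hA.nonneg
    have h2 : 4 * KK 2 * a ≤ 1 := le_trans (by gcongr) hs
    have a1 : a ≤ 1 := by nlinarith
    have y2 := inv2 hu hy h ha h2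
    have ym := invm hm hu hy h ha hA hs
    have hN := Nf_SP (p := j) hu hy
    have hW := (hu.smul (-(j:ℝ))).add hN
    have e : Nf (j + 1) u y = fun x => Nf j u y x + (y x * ((-(j:ℝ)) * u x + Nf j u y x) + (-1) * (u x * y x)) := by
      ext x
      have := h x
      simp only [Nf, pow_succ]; push_cast
      linear_combination this
    have W2 : Bd 2 (fun x => (-(j:ℝ)) * u x + Nf j u y x) ((j + C) * a) := by
      refine (Bd.add (hu.smul _) hN (ha.smul (-(j:ℝ))) i2).mono ?_
      rw [abs_neg, Nat.abs_cast]
      nlinarith [mul_nonneg hC a0]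
    have Wm : Bd m (fun x => (-(j:ℝ)) * u x + Nf j u y x) ((j + C) * A) := by
      refine (Bd.add (hu.smul _) hN (hA.smul (-(j:ℝ))) im).mono ?_
      rw [abs_neg, Nat.abs_cast]
      nlinarith [mul_nonneg hC A0]
    have j0 : (0:ℝ) ≤ j := Nat.cast_nonneg j
    rw [e]
    constructor
    · refine (Bd.add hN ((hy.mul hW).add ((hu.mul hy).smul _)) i2
        (Bd.add (hy.mul hW) ((hu.mul hy).smul _) (Bd_mul hy hW y2 y2 W2 W2)
          ((Bd_mul hu hy ha ha y2 y2).smul (-1)))).mono ?_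
      simp only [abs_neg, abs_one, one_mul]
      change C * a * a + (KK 2 * (2 * a * ((j + C) * a) + 2 * a * ((j + C) * a)) + KK 2 * (a * (2 * a) + a * (2 * a))) ≤ _
      calc _ = C * a * a + (KK 2 * (4 * (j + C) * a * a) + KK 2 * (4 * a * a)) := by ring
        _ ≤ C * a * a + (KK m * (6 * (j + C) * a * a) + KK m * (6 * a * a)) := by gcongr <;> norm_num
        _ = _ := by ring
    · refine (Bd.add hN ((hy.mul hW).add ((hu.mul hy).smul _)) im
        (Bd.add (hy.mul hW) ((hu.mul hy).smul _) (Bd_mul hy hW y2 ym W2 Wm)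
          ((Bd_mul hu hy ha hA y2 ym).smul (-1)))).mono ?_
      simp only [abs_neg, abs_one, one_mul]
      change C * a * A + (KK m * (4 * A * ((j + C) * a) + 2 * a * ((j + C) * A)) + KK m * (A * (2 * a) + a * (4 * A))) ≤ _
      exact le_of_eq (by ring)


structure PFlow (p : ℕ) (T : ℝ) (R : ℝ → ℝ) (u y : ℝ → ℝ → ℝ) : Prop where
  pos : 1 ≤ p
  Tpos : 0 < T
  Rpos : ∀ t ∈ Ico 0 T, 0 < R t
  spu : ∀ t ∈ Ico 0 T, SP (u t)
  spy : ∀ t ∈ Ico 0 T, SP (y t)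
  inv : ∀ t ∈ Ico 0 T, ∀ x, (1 + u t x) * (1 + y t x) = 1
  Rder : ∀ t ∈ Ioo 0 T, HasDerivAt R
    (-((R t ^ (p + 1))⁻¹ * R t * (1 + (fCoeff (Nf p (u t) (y t)) 0).re) / p)) t
  uder : ∀ t ∈ Ioo 0 T, ∀ n : ℤ, n ≠ 0 → HasDerivAt (fun s => (R s : ℂ) * fCoeff (u s) n)
    (((R t ^ (p + 1))⁻¹ : ℝ) * (-(((n:ℝ)^2 - 1 : ℝ) : ℂ) * (R t * fCoeff (u t) n)
      + (((n:ℝ)^2 - 1 : ℝ) : ℂ) * (R t * fCoeff (Nf p (u t) (y t)) n / p))) t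
  low : ∀ t ∈ Ico 0 T, ∀ n : ℤ, |n| ≤ 1 → fCoeff (u t) n = 0
  bdd : ∀ m : ℕ, ∀ t1 < T, ∃ A, ∀ t ∈ Icc 0 t1, Bd m (u t) A
  ucont : ∀ n, ContinuousOn (fun t => fCoeff (u t) n) (Ico 0 T)
  blow : ∀ B : ℝ, ∀ᶠ t in nhdsWithin T (Iio T), ∃ x, B < (1 + y t x) / R t

theorem comp_ode {t0 t1 a : ℝ} {σ S B B' : ℝ → ℝ} {x b : ℝ → ℂ}
    (hx : ∀ t ∈ Icc t0 t1, HasDerivAt x ((σ t : ℂ) * (-(a:ℂ) * x t + b t)) t)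
    (hB : ∀ t ∈ Icc t0 t1, HasDerivAt B (B' t) t)
    (hS : ∀ t ∈ Icc t0 t1, HasDerivAt S (σ t) t)
    (hσ : ∀ t ∈ Icc t0 t1, 0 ≤ σ t)
    (hin : ∀ t ∈ Icc t0 t1, σ t * (-a * B t + ‖b t‖) ≤ B' t)
    (h0 : ‖x t0‖ ≤ B t0) : ∀ t ∈ Icc t0 t1, ‖x t‖ ≤ B t := by
  have hE : ∀ t ∈ Icc t0 t1, HasDerivAt (fun t => Real.exp (a * S t)) (Real.exp (a * S t) * (a * σ t)) t :=
    fun t ht => ((hS t ht).const_mul a).exp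
  have hX : ∀ t ∈ Icc t0 t1, HasDerivAt (fun t => ((Real.exp (a * S t) : ℝ) : ℂ) * x t)
      (((Real.exp (a * S t) * σ t : ℝ) : ℂ) * b t) t := by
    intro t ht
    have := (hE t ht).ofReal_comp.mul (hx t ht)
    refine this.congr_deriv ?_
    push_cast; ring
  have hG : ∀ t ∈ Icc t0 t1, HasDerivAt (fun t => Real.exp (a * S t) * B t)
      (Real.exp (a * S t) * (a * σ t) * B t + Real.exp (a * S t) * B' t) t :=
    fun t ht => (hE t ht).mul (hB t ht)
  have key := image_norm_le_of_norm_deriv_right_le_deriv_boundary' (a := t0) (b := t1)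
    (fun t ht => (hX t ht).continuousAt.continuousWithinAt)
    (fun t ht => (hX t ⟨ht.1, ht.2.le⟩).hasDerivWithinAt)
    (B := fun t => Real.exp (a * S t) * B t) (by
      rw [norm_mul, Complex.norm_real, Real.norm_of_nonneg (Real.exp_pos _).le]
      gcongr)
    (fun t ht => (hG t ht).continuousAt.continuousWithinAt)
    (fun t ht => (hG t ⟨ht.1, ht.2.le⟩).hasDerivWithinAt)
    (fun t ht => by
      have ht' : t ∈ Icc t0 t1 := ⟨ht.1, ht.2.le⟩
      rw [norm_mul, Complex.norm_real, Real.norm_of_nonneg (mul_nonneg (Real.exp_pos _).le (hσ t ht'))]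
      have := mul_le_mul_of_nonneg_left (hin t ht') (Real.exp_pos (a * S t)).le
      nlinarith)
  intro t ht
  have := key ht
  rw [norm_mul, Complex.norm_real, Real.norm_of_nonneg (Real.exp_pos _).le] at this
  exact le_of_mul_le_mul_left this (Real.exp_pos _)

theorem halve (P : ℝ → Prop) (hmono : ∀ a b, a ≤ b → P a → P b) {M D : ℝ} (hD : 0 < D) (hM : P M)
    (step : ∀ M, D ≤ M → P M → P (max D (M / 2))) : P D := by
  have h : ∀ j : ℕ, P (max D (M / 2 ^ j)) := by
    intro j
    induction j with
    | zero => simpa using hmono M _ (le_max_right _ _) hM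
    | succ j ih =>
      refine hmono _ _ ?_ (step _ (le_max_left _ _) ih)
      refine max_le (le_max_left _ _) ?_
      rcases le_total D (M / 2 ^ j) with h | h
      · rw [max_eq_right h, pow_succ, ← div_div]; exact le_max_right _ _
      · rw [max_eq_left h]; exact le_trans (by linarith) (le_max_left _ _)
  have : Tendsto (fun j : ℕ => M / 2 ^ j) atTop (nhds 0) := by
    simpa [div_eq_mul_inv] using (tendsto_inv_atTop_zero.comp (tendsto_pow_atTop_atTop_of_one_lt (one_lt_two (α := ℝ)))).const_mul M
  obtain ⟨j, hj⟩ := (this.eventually (gt_mem_nhds hD)).exists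
  have := h j
  rwa [max_eq_left hj.le] at this

section
variable {p : ℕ} {T : ℝ} {R : ℝ → ℝ} {u y : ℝ → ℝ → ℝ}

theorem PFlow.Rcont (F : PFlow p T R u y) : ContinuousOn R (Ioo 0 T) :=
  fun t ht => (F.Rder t ht).continuousAt.continuousWithinAt

theorem PFlow.exS (F : PFlow p T R u y) : ∃ S : ℝ → ℝ, ∀ t ∈ Ioo 0 T, HasDerivAt S ((R t ^ (p + 1))⁻¹) t := by
  have hc : ContinuousOn (fun t => (R t ^ (p + 1))⁻¹) (Ioo 0 T) :=
    (F.Rcont.pow _).inv₀ fun t ht => (pow_pos (F.Rpos t ⟨ht.1.le, ht.2⟩) _).ne'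
  refine ⟨fun t => ∫ s in (T/2)..t, (R s ^ (p + 1))⁻¹, fun t ht => ?_⟩
  have hT := F.Tpos
  refine intervalIntegral.integral_hasDerivAt_right ?_ ?_ (hc.continuousAt (isOpen_Ioo.mem_nhds ht))
  · refine (hc.mono ?_).intervalIntegrable
    exact (convex_Ioo 0 T).ordConnected.uIcc_subset ⟨by linarith, by linarith⟩ ht
  · exact hc.stronglyMeasurableAtFilter isOpen_Ioo t ht

theorem a_ge {n : ℤ} (hn : ¬ |n| ≤ 1) : (3:ℝ) ≤ (n:ℝ)^2 - 1 := by
  have h : 2 ≤ |n| := by omega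
  have : (2:ℝ) ≤ |(n:ℝ)| := by exact_mod_cast h
  nlinarith [sq_abs (n:ℝ)]

theorem antiR (F : PFlow p T R u y) {t0 t1 : ℝ} (h0 : 0 < t0) (h1 : t1 < T)
    (h : ∀ t ∈ Icc t0 t1, -1 ≤ (fCoeff (Nf p (u t) (y t)) 0).re) : AntitoneOn R (Icc t0 t1) := by
  have hs : Icc t0 t1 ⊆ Ioo 0 T := fun t ht => ⟨by linarith [ht.1], by linarith [ht.2]⟩
  refine antitoneOn_of_deriv_nonpos (convex_Icc _ _) (F.Rcont.mono hs)
    (fun t ht => (F.Rder t (hs (interior_subset ht))).differentiableAt.differentiableWithinAt) ?_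
  intro t ht
  have ht := interior_subset ht
  rw [(F.Rder t (hs ht)).deriv]
  have := F.Rpos t ⟨(hs ht).1.le, (hs ht).2⟩
  have h2 : 0 ≤ 1 + (fCoeff (Nf p (u t) (y t)) 0).re := by linarith [h t ht]
  rw [neg_nonpos]; positivity

end

/-- Lemma A -/
theorem lemA (p m : ℕ) (hm : 2 ≤ m) : ∃ ε > (0:ℝ), 4 * KK m * ε ≤ 1 ∧
    ∀ (T : ℝ) (R : ℝ → ℝ) (u y : ℝ → ℝ → ℝ), PFlow p T R u y → ∀ t0 t1 : ℝ, 0 < t0 → t0 ≤ t1 → t1 < T →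
    (∀ t ∈ Icc t0 t1, Bd 2 (u t) ε) →
    (∀ t ∈ Icc t0 t1, |(fCoeff (Nf p (u t) (y t)) 0).re| ≤ 1 / 20) ∧
    ∀ D : ℝ, 0 < D → Bd m (u t0) D →
      ∀ t ∈ Icc t0 t1, Bd m (u t) (D * (R t / R t0) ^ (3 / 2 * p : ℝ)) := by
  obtain ⟨C, hC, hN⟩ := Nf_Bd m hm p
  have hK := KK_one_le m
  set ε : ℝ := 1 / (20 * (C + 1) + 4 * KK m) with hε
  have hεp : 0 < ε := by positivity
  have hCε : C * ε ≤ 1 / 20 := by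
    rw [hε, mul_one_div, div_le_div_iff₀ (by positivity) (by norm_num)]; nlinarith
  have hKε : 4 * KK m * ε ≤ 1 := by
    rw [hε, mul_one_div, div_le_one (by positivity)]; nlinarith
  have hε1 : ε ≤ 1 := by nlinarith
  refine ⟨ε, hεp, hKε, fun T R u y F t0 t1 h0 h01 h1 hu => ?_⟩
  have hs : ∀ t ∈ Icc t0 t1, t ∈ Ioo 0 T := fun t ht => ⟨by linarith [ht.1], by linarith [ht.2]⟩
  have hs' : ∀ t ∈ Icc t0 t1, t ∈ Ico 0 T := fun t ht => ⟨by linarith [ht.1], by linarith [ht.2]⟩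
  have hν : ∀ t ∈ Icc t0 t1, |(fCoeff (Nf p (u t) (y t)) 0).re| ≤ 1 / 20 := by
    intro t ht
    obtain ⟨A, -, hA⟩ := (F.spu t (hs' t ht)).exists_Bd m
    have := (hN (u t) (y t) (F.spu t (hs' t ht)) (F.spy t (hs' t ht)) (F.inv t (hs' t ht)) ε A (hu t ht) hA hKε).1 0
    simp only [jb, Int.cast_zero, abs_zero, zero_le_one, sup_of_le_left, one_pow, one_mul] at this
    refine (Complex.abs_re_le_norm _).trans (this.trans ?_)
    nlinarith
  refine ⟨hν, fun D hD hD0 => ?_⟩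
  obtain ⟨S, hS⟩ := F.exS
  have hp1 : (1:ℝ) ≤ p := by exact_mod_cast F.pos
  set q : ℝ := 3 / 2 * p with hq
  have R0 : 0 < R t0 := F.Rpos t0 (hs' t0 ⟨le_rfl, h01⟩)
  have hRq : ∀ t ∈ Icc t0 t1, 0 < (R t / R t0) ^ q := fun t ht =>
    Real.rpow_pos_of_pos (div_pos (F.Rpos t (hs' t ht)) R0) _
  -- initial M
  obtain ⟨A, hA⟩ := F.bdd m t1 h1
  have hcont : ContinuousOn (fun t => A * ((R t / R t0) ^ q)⁻¹) (Icc t0 t1) := by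
    refine continuousOn_const.mul (ContinuousOn.inv₀ ?_ fun t ht => (hRq t ht).ne')
    refine ((F.Rcont.mono hs).div_const _).rpow_const fun t ht => Or.inl (div_pos (F.Rpos t (hs' t ht)) R0).ne'
  obtain ⟨M, hM⟩ := isCompact_Icc.exists_bound_of_continuousOn hcont
  refine halve (fun M => ∀ t ∈ Icc t0 t1, Bd m (u t) (M * (R t / R t0) ^ q)) ?_ (M := M) hD ?_ ?_
  · intro a b hab h t ht
    exact (h t ht).mono (mul_le_mul_of_nonneg_right hab (hRq t ht).le)
  · intro t ht
    refine (hA t ⟨(hs' t ht).1, ht.2⟩).mono ?_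
    have := (le_abs_self _).trans (hM t ht)
    rwa [← div_eq_mul_inv, div_le_iff₀ (hRq t ht)] at this
  · intro M hDM hP t ht n
    set M' := max D (M / 2) with hM'
    have hMM : M ≤ 2 * M' := by linarith [le_max_right D (M / 2)]
    have hM'p : 0 < M' := lt_of_lt_of_le hD (le_max_left _ _)
    have hj := jb_pos n
    by_cases hn : |n| ≤ 1
    · rw [F.low t (hs' t ht) n hn, norm_zero, mul_zero]
      have := hRq t ht; positivity
    have ha := a_ge hn
    have hn0 : n ≠ 0 := by rintro rfl; simp at hn
    set E : ℝ := M' / jb n ^ m * (R t0 ^ q)⁻¹ with hE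
    have hEp : 0 < E := by
      have := Real.rpow_pos_of_pos R0 q
      positivity
    have hBe : ∀ s ∈ Icc t0 t1, E * R s ^ (1 + q) = R s * (M' / jb n ^ m * (R s / R t0) ^ q) := by
      intro s hs1
      have := F.Rpos s (hs' s hs1)
      rw [Real.rpow_add this, Real.rpow_one, Real.div_rpow this.le R0.le, hE]
      ring
    have key := comp_ode (t0 := t0) (t1 := t1) (a := (n:ℝ)^2 - 1)
      (fun s hs1 => F.uder s (hs s hs1) n hn0)
      (B := fun s => E * R s ^ (1 + q))
      (fun s hs1 => ((F.Rder s (hs s hs1)).rpow_const (Or.inl (F.Rpos s (hs' s hs1)).ne')).const_mul E)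
      (fun s hs1 => hS s (hs s hs1))
      (fun s hs1 => by have := F.Rpos s (hs' s hs1); positivity)
      (fun s hs1 => by
        have Rs := F.Rpos s (hs' s hs1)
        have hNn := ((hN (u s) (y s) (F.spu s (hs' s hs1)) (F.spy s (hs' s hs1)) (F.inv s (hs' s hs1)) ε _ (hu s hs1) (hP s hs1) hKε).2).norm_le n
        have hνs := abs_le.1 (hν s hs1)
        set ν := (fCoeff (Nf p (u s) (y s)) 0).re with hνd
        have e1 : R s * R s ^ (1 + q - 1) = R s ^ (1 + q) := by
          rw [show 1 + q - 1 = q by ring, Real.rpow_add Rs, Real.rpow_one]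
        rw [show E * (-((R s ^ (p + 1))⁻¹ * R s * (1 + ν) / p) * (1 + q) * R s ^ (1 + q - 1))
          = (R s ^ (p + 1))⁻¹ * (-((1 + ν) * (1 + q) / p) * (E * (R s * R s ^ (1 + q - 1)))) by
            ring, e1]
        refine mul_le_mul_of_nonneg_left ?_ (by positivity)
        have hBp : 0 < E * R s ^ (1 + q) := mul_pos hEp (Real.rpow_pos_of_pos Rs _)
        have hc : (1 + ν) * (1 + q) / p ≤ 21 / 8 := by
          rw [div_le_iff₀ (by positivity), hq]
          nlinarith
        have hb : ‖(((n:ℝ)^2 - 1 : ℝ) : ℂ) * (R s * fCoeff (Nf p (u s) (y s)) n / p)‖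
            ≤ ((n:ℝ)^2 - 1) * (E * R s ^ (1 + q)) / 8 := by
          rw [norm_mul, norm_div, norm_mul, Complex.norm_real, Complex.norm_real, Complex.norm_natCast,
            Real.norm_of_nonneg (show (0:ℝ) ≤ (n:ℝ)^2 - 1 by linarith), Real.norm_of_nonneg Rs.le, mul_div_assoc ((n:ℝ)^2 - 1)]
          refine mul_le_mul_of_nonneg_left ?_ (by linarith)
          rw [hBe s hs1]
          have hw := hRq s hs1
          calc R s * ‖fCoeff (Nf p (u s) (y s)) n‖ / p ≤ R s * ‖fCoeff (Nf p (u s) (y s)) n‖ :=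
                div_le_self (by positivity) hp1
            _ ≤ R s * (C * ε * (M * (R s / R t0) ^ q) / jb n ^ m) := by gcongr
            _ ≤ R s * (1 / 20 * (2 * M' * (R s / R t0) ^ q) / jb n ^ m) := by
                have : 0 ≤ M := by linarith
                gcongr
            _ = R s * (M' / jb n ^ m * (R s / R t0) ^ q) * (1 / 10) := by ring
            _ ≤ R s * (M' / jb n ^ m * (R s / R t0) ^ q) * (1 / 8) := by gcongr; norm_num
            _ = _ := by ring
        nlinarith)
      (by
        have ht0 : t0 ∈ Icc t0 t1 := ⟨le_rfl, h01⟩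
        rw [hBe t0 ht0, div_self R0.ne', Real.one_rpow, mul_one, norm_mul, Complex.norm_real, Real.norm_of_nonneg R0.le]
        refine mul_le_mul_of_nonneg_left (((hD0).mono (le_max_left _ _)).norm_le n) R0.le)
      t ht
    have Rt := F.Rpos t (hs' t ht)
    rw [hBe t ht, norm_mul, Complex.norm_real, Real.norm_of_nonneg Rt.le] at key
    have := le_of_mul_le_mul_left key Rt
    rw [div_mul_eq_mul_div, le_div_iff₀ (by positivity)] at this
    linarith


section
variable {p : ℕ} {T : ℝ} {R : ℝ → ℝ} {u y : ℝ → ℝ → ℝ}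

theorem opn (F : PFlow p T R u y) {t c c' : ℝ} (ht : t ∈ Ico 0 T) (h : Bd 2 (u t) c) (hc : c < c') :
    ∃ η > 0, t + η < T ∧ ∀ s ∈ Icc t (t + η), Bd 2 (u s) c' := by
  have hc' : 0 < c' := lt_of_le_of_lt h.nonneg hc
  have ht2 := ht.2
  obtain ⟨A, hA⟩ := F.bdd 3 ((t + T) / 2) (by linarith)
  obtain ⟨N, hN⟩ := exists_nat_ge (A / c')
  have hev : ∀ᶠ s in nhdsWithin t (Ico 0 T), ∀ n ∈ Finset.Icc (-(N:ℤ)) N,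
      jb n ^ 2 * ‖fCoeff (u s) n‖ < c' := by
    rw [eventually_all_finset]
    intro n _
    have h1 : ContinuousWithinAt (fun s => jb n ^ 2 * ‖fCoeff (u s) n‖) (Ico 0 T) t :=
      continuousWithinAt_const.mul (F.ucont n t ht).norm
    exact h1.eventually (gt_mem_nhds (lt_of_le_of_lt (h n) hc))
  obtain ⟨δ, hδ, hsub⟩ := Metric.mem_nhdsWithin_iff.1 hev
  refine ⟨min (δ / 2) ((T - t) / 4), lt_min (by linarith) (by linarith), ?_, fun s hs n => ?_⟩
  · linarith [min_le_right (δ / 2) ((T - t) / 4)]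
  have e1 := min_le_left (δ / 2) ((T - t) / 4)
  have e2 := min_le_right (δ / 2) ((T - t) / 4)
  have hs0 : s ∈ Ico 0 T := ⟨ht.1.trans hs.1, by linarith [hs.2]⟩
  by_cases hn : n ∈ Finset.Icc (-(N:ℤ)) N
  · refine (hsub ⟨?_, hs0⟩ n hn).le
    rw [Metric.mem_ball, Real.dist_eq, abs_of_nonneg (by linarith [hs.1])]
    linarith [hs.2]
  · have h3 := hA s ⟨hs0.1, by linarith [hs.2]⟩ n
    have hj := jb_pos n
    have hn' : (N:ℝ) ≤ jb n := by
      refine le_trans ?_ (le_max_right _ _)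
      have : (N:ℤ) ≤ |n| := by
        rw [Finset.mem_Icc, ← abs_le] at hn; omega
      exact_mod_cast this
    have : A ≤ c' * jb n := by
      have := (div_le_iff₀ hc').1 (hN.trans hn'); linarith
    have h4 : jb n * (jb n ^ 2 * ‖fCoeff (u s) n‖) ≤ jb n * c' := by nlinarith
    exact le_of_mul_le_mul_left h4 hj

end

theorem boot (p : ℕ) : ∃ ε > (0:ℝ), 4 * KK 2 * ε ≤ 1 ∧
    ∀ (T : ℝ) (R : ℝ → ℝ) (u y : ℝ → ℝ → ℝ), PFlow p T R u y → Bd 2 (u 0) (ε / 4) →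
    ∃ t0 ∈ Ioo 0 T, ∀ t ∈ Ico t0 T, |(fCoeff (Nf p (u t) (y t)) 0).re| ≤ 1 / 20 ∧
      Bd 2 (u t) ε ∧ Bd 2 (u t) (ε * (R t / R t0) ^ (3 / 2 * p : ℝ)) := by
  obtain ⟨ε, hε, hK, hA⟩ := lemA p 2 le_rfl
  refine ⟨ε, hε, hK, fun T R u y F hu0 => ?_⟩
  have hT := F.Tpos
  obtain ⟨t0, ht0, ht0T, h0⟩ := opn F (t := 0) ⟨le_rfl, hT⟩ hu0 (show ε / 4 < ε / 2 by linarith)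
  rw [zero_add] at ht0T h0
  have main : ∀ t1, t0 ≤ t1 → t1 < T → Icc t0 t1 ⊆ {t | Bd 2 (u t) (ε / 2)} := by
    intro t1 h01 h1
    refine IsClosed.Icc_subset_of_forall_exists_gt ?_ (h0 t0 ⟨ht0.le, le_rfl⟩) ?_
    · have : {t | Bd 2 (u t) (ε / 2)} ∩ Icc t0 t1 =
          ⋂ n : ℤ, Icc t0 t1 ∩ (fun t => jb n ^ 2 * ‖fCoeff (u t) n‖) ⁻¹' Iic (ε / 2) := by
        ext t
        simp only [mem_inter_iff, mem_ofPred_eq, Bd, mem_iInter, mem_preimage, mem_Iic]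
        constructor
        · intro h n; exact ⟨h.2, h.1 n⟩
        · intro h; exact ⟨fun n => (h n).2, (h 0).1⟩
      rw [this]
      refine isClosed_iInter fun n => ContinuousOn.preimage_isClosed_of_isClosed ?_ isClosed_Icc isClosed_Iic
      refine continuousOn_const.mul (ContinuousOn.norm ((F.ucont n).mono ?_))
      intro t ht; exact ⟨by linarith [ht.1], by linarith [ht.2]⟩
    · rintro x ⟨hx, hx1⟩ z hz
      rw [mem_Ioi] at hz
      have hxT : x ∈ Ico 0 T := ⟨by linarith [hx1.1], by linarith [hx1.2]⟩
      obtain ⟨η, hη, hηT, h3⟩ := opn F hxT hx (show ε / 2 < ε by linarith)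
      obtain ⟨hν, hB⟩ := hA T R u y F x (x + η) (by linarith [hx1.1]) (by linarith) hηT h3
      have hanti := antiR F (t0 := x) (t1 := x + η) (by linarith [hx1.1]) hηT
        (fun t ht => by linarith [(abs_le.1 (hν t ht)).1])
      refine ⟨min z (x + η), ?_, lt_min hz (by linarith), min_le_left _ _⟩
      have hm : min z (x + η) ∈ Icc x (x + η) := ⟨le_min hz.le (by linarith), min_le_right _ _⟩
      refine (hB (ε / 2) (by linarith) hx _ hm).mono ?_
      have hR := hanti ⟨le_rfl, by linarith⟩ hm hm.1
      have hRx := F.Rpos x hxT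
      have hRm := F.Rpos (min z (x + η)) ⟨hxT.1.trans hm.1, by linarith [hm.2]⟩
      refine mul_le_of_le_one_right (by linarith) (Real.rpow_le_one (by positivity) ?_ (by positivity))
      exact (div_le_one hRx).2 hR
  refine ⟨t0, ⟨ht0, ht0T⟩, fun t ht => ?_⟩
  have hsub := main t ht.1 ht.2
  obtain ⟨hν, hB⟩ := hA T R u y F t0 t ht0 ht.1 ht.2 (fun s hs => (hsub hs).mono (by linarith))
  exact ⟨hν t ⟨ht.1, le_rfl⟩, (hsub ⟨ht.1, le_rfl⟩).mono (by linarith), hB ε hε ((hsub ⟨le_rfl, ht.1⟩).mono (by linarith)) t ⟨ht.1, le_rfl⟩⟩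

section
variable {p : ℕ} {T : ℝ} {R : ℝ → ℝ} {u y : ℝ → ℝ → ℝ}

theorem R_small (F : PFlow p T R u y) {t0 a : ℝ} (h0 : t0 ∈ Ioo 0 T) (ha : 4 * KK 2 * a ≤ 1)
    (h : ∀ t ∈ Ico t0 T, Bd 2 (u t) a) {δ : ℝ} (hδ : 0 < δ) :
    ∃ s ∈ Ioo t0 T, ∀ t ∈ Ico s T, R t < δ := by
  have hev := F.blow ((1 + 2 * a * Z0) / δ)
  obtain ⟨s, hs, hsub⟩ := (mem_nhdsLT_iff_exists_Ioo_subset).1 hev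
  have hs' : s < T := hs
  have h02 := h0.2
  refine ⟨(max s t0 + T) / 2, ⟨?_, ?_⟩, fun t ht => ?_⟩
  · linarith [le_max_right s t0]
  · linarith [max_lt hs' h02]
  have h1 : max s t0 < t := by linarith [max_lt hs' h02, ht.1]
  obtain ⟨x, hx⟩ := hsub ⟨lt_of_le_of_lt (le_max_left _ _) h1, ht.2⟩
  have ht0 : t0 < t := lt_of_le_of_lt (le_max_right _ _) h1
  have htT : t ∈ Ico 0 T := ⟨by linarith [h0.1], ht.2⟩
  have hy := sup_leZ (F.spy t htT) (inv2 (F.spu t htT) (F.spy t htT) (F.inv t htT) (h t ⟨ht0.le, ht.2⟩) ha) x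
  have hR := F.Rpos t htT
  have hx' : (1 + 2 * a * Z0) / δ < (1 + y t x) / R t := hx
  rw [div_lt_div_iff₀ hδ hR] at hx'
  have hpos : 0 < 1 + 2 * a * Z0 := by linarith [(abs_nonneg (y t x)).trans hy]
  have : (1 + y t x) * δ ≤ (1 + 2 * a * Z0) * δ := by
    gcongr; exact (le_abs_self _).trans hy
  exact lt_of_mul_lt_mul_left (hx'.trans_le this) hpos.le

set_option maxHeartbeats 2000000 in
theorem sharp (F : PFlow p T R u y) {m : ℕ} (hm : 2 ≤ m) {t0 a D0 : ℝ} (h0 : t0 ∈ Ioo 0 T)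
    (ha : 4 * KK 2 * a ≤ 1) (hD0 : 0 < D0)
    (hν : ∀ t ∈ Ico t0 T, |(fCoeff (Nf p (u t) (y t)) 0).re| ≤ 1 / 20)
    (hua : ∀ t ∈ Ico t0 T, Bd 2 (u t) a)
    (huD : ∀ t ∈ Ico t0 T, Bd 2 (u t) (D0 * (R t / R t0) ^ (3 / 2 * p : ℝ))) :
    ∃ s ∈ Ioo t0 T, ∃ E > (0:ℝ), ∀ t ∈ Ico s T, R t ≤ 1 ∧ Bd m (y t) (E * R t ^ (3 * p - 1)) ∧
      |(fCoeff (Nf p (u t) (y t)) 0).re| ≤ E * R t ^ (3 * p) := by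
  obtain ⟨ε, hε, hKε, hlem⟩ := lemA p (m + 2) (by omega)
  obtain ⟨C, hC, hN⟩ := Nf_Bd (m + 2) (by omega) p
  have hp1 : (1:ℝ) ≤ p := by exact_mod_cast F.pos
  have h00 := h0.1
  have h0T : t0 ∈ Ico 0 T := ⟨h00.le, h0.2⟩
  have R0 := F.Rpos t0 h0T
  have hI : ∀ t ∈ Ico t0 T, t ∈ Ico 0 T := fun t ht => ⟨by linarith [ht.1], ht.2⟩
  set q : ℝ := 3 / 2 * p with hq
  have hq1 : 1 ≤ q := by rw [hq]; linarith
  obtain ⟨s1, hs1, hR1⟩ := R_small F h0 ha hua (δ := min (R t0) (R t0 * ε / D0)) (by positivity)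
  have hI1 : ∀ t ∈ Ico s1 T, t ∈ Ico t0 T := fun t ht => ⟨hs1.1.le.trans ht.1, ht.2⟩
  have hs1I : s1 ∈ Ico s1 T := ⟨le_rfl, hs1.2⟩
  have hsm : ∀ t ∈ Ico s1 T, D0 * (R t / R t0) ^ q ≤ ε := by
    intro t ht
    have Rt := F.Rpos t (hI t (hI1 t ht))
    have e1 : R t / R t0 ≤ 1 := (div_le_one R0).2 ((hR1 t ht).le.trans (min_le_left _ _))
    have e2 := Real.rpow_le_rpow_of_exponent_ge (by positivity) e1 hq1
    rw [Real.rpow_one] at e2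
    have e3 := (hR1 t ht).le.trans (min_le_right _ _)
    rw [le_div_iff₀ hD0] at e3
    calc D0 * (R t / R t0) ^ q ≤ D0 * (R t / R t0) := by gcongr
      _ ≤ ε := by rw [← mul_div_assoc, div_le_iff₀ R0]; linarith
  have Rs1 := F.Rpos s1 (hI _ (hI1 _ hs1I))
  obtain ⟨D, hD, hDs⟩ := (F.spu s1 (hI _ (hI1 _ hs1I))).exists_Bd (m + 2)
  set C1 : ℝ := C * (D0 / R t0 ^ q) * (D / R s1 ^ q) + 1 with hC1
  have hC1p : 0 < C1 := by have := Real.rpow_pos_of_pos R0 q; have := Real.rpow_pos_of_pos Rs1 q; positivity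
  have hNb : ∀ t ∈ Ico s1 T, Bd (m + 2) (Nf p (u t) (y t)) (C1 * R t ^ (3 * p)) := by
    intro t ht
    have htT := hI t (hI1 t ht)
    have Rt := F.Rpos t htT
    have hB := (hlem T R u y F s1 t (by linarith [hs1.1]) ht.1 ht.2 (fun s hs => by
      have hs' : s ∈ Ico s1 T := ⟨hs.1, lt_of_le_of_lt hs.2 ht.2⟩
      exact (huD s (hI1 s hs')).mono (hsm s hs'))).2 D hD hDs t ⟨ht.1, le_rfl⟩
    have hsm' : 4 * KK (m + 2) * (D0 * (R t / R t0) ^ q) ≤ 1 :=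
      le_trans (mul_le_mul_of_nonneg_left (hsm t ht) (by linarith [KK_one_le (m + 2)])) hKε
    refine ((hN (u t) (y t) (F.spu t htT) (F.spy t htT) (F.inv t htT) _ _ (huD t (hI1 t ht)) hB hsm').2).mono ?_
    have e : R t ^ (3 * p) = R t ^ q * R t ^ q := by
      rw [← Real.rpow_add Rt, ← Real.rpow_natCast]; congr 1; push_cast; rw [hq]; ring
    rw [Real.div_rpow Rt.le R0.le, Real.div_rpow Rt.le Rs1.le, e, hC1]
    have := Real.rpow_pos_of_pos Rt q
    have e' : C * (D0 * (R t ^ q / R t0 ^ q)) * (D * (R t ^ q / R s1 ^ q)) =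
      C * (D0 / R t0 ^ q) * (D / R s1 ^ q) * (R t ^ q * R t ^ q) := by ring
    rw [e', add_mul]
    have : 0 < R t ^ q * R t ^ q := by positivity
    linarith
  have hνb : ∀ t ∈ Ico s1 T, |(fCoeff (Nf p (u t) (y t)) 0).re| ≤ C1 * R t ^ (3 * p) := by
    intro t ht
    have := hNb t ht 0
    simp only [jb, Int.cast_zero, abs_zero, zero_le_one, sup_of_le_left, one_pow, one_mul] at this
    exact (Complex.abs_re_le_norm _).trans this
  obtain ⟨s2, hs2, hR2⟩ := R_small F (t0 := s1) ⟨by linarith [hs1.1], hs1.2⟩ ha (fun t ht => hua t (hI1 t ht))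
    (δ := min 1 (1 / (24 * p * C1))) (by positivity)
  have hI2 : ∀ t ∈ Ico s2 T, t ∈ Ico s1 T := fun t ht => ⟨hs2.1.le.trans ht.1, ht.2⟩
  have hs2I : s2 ∈ Ico s2 T := ⟨le_rfl, hs2.2⟩
  set r := R s2 with hr
  have hs2T := hI _ (hI1 _ (hI2 _ hs2I))
  have hrp : 0 < r := F.Rpos s2 hs2T
  have hr24 : 24 * p * C1 * r ≤ 1 := by
    have := (hR2 s2 hs2I).le.trans (min_le_right _ _)
    rw [le_div_iff₀ (by positivity)] at this
    linarith
  obtain ⟨A, hAp, hA⟩ := (F.spu s2 hs2T).exists_Bd m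
  set E : ℝ := 4 * p * C1 + A / r ^ (3 * p) with hE
  have hEp : 0 < E := by positivity
  have hEC : 4 * p * C1 ≤ E := by rw [hE]; have : 0 < A / r ^ (3 * p) := by positivity
                                  linarith
  have hEA : A ≤ E * r ^ (3 * p) := by
    rw [hE, add_mul, div_mul_cancel₀ _ (by positivity)]
    have : 0 < 4 * p * C1 * r ^ (3 * p) := by positivity
    linarith
  obtain ⟨S, hS⟩ := F.exS
  have hub : ∀ t ∈ Ico s2 T, Bd m (u t) (2 * r * E * R t ^ (3 * p - 1)) := by
    intro t1 ht1 n
    have hJ : ∀ t ∈ Icc s2 t1, t ∈ Ico s2 T := fun t ht => ⟨ht.1, lt_of_le_of_lt ht.2 ht1.2⟩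
    have hJo : ∀ t ∈ Icc s2 t1, t ∈ Ioo 0 T := fun t ht => ⟨by linarith [ht.1, hs2.1, hs1.1], (hJ t ht).2⟩
    have hJc : ∀ t ∈ Icc s2 t1, t ∈ Ico 0 T := fun t ht => ⟨(hJo t ht).1.le, (hJo t ht).2⟩
    have ht1c := hJc t1 ⟨ht1.1, le_rfl⟩
    have Rt1 := F.Rpos t1 ht1c
    have hj := jb_pos n
    by_cases hn : |n| ≤ 1
    · rw [F.low t1 ht1c n hn, norm_zero, mul_zero]; positivity
    have han := a_ge hn
    have hn0 : n ≠ 0 := by rintro rfl; simp at hn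
    have hjn : (n:ℝ)^2 - 1 ≤ jb n ^ 2 := by
      have : |(n:ℝ)| ≤ jb n := le_max_right _ _
      nlinarith [sq_abs (n:ℝ), abs_nonneg (n:ℝ)]
    have hanti := antiR F (t0 := s2) (t1 := t1) (by linarith [hs2.1, hs1.1]) ht1.2
        (fun t ht => by linarith [(abs_le.1 (hν t (hI1 _ (hI2 _ (hJ t ht))))).1])
    have hRr : ∀ t ∈ Icc s2 t1, R t ≤ r := fun t ht => hanti ⟨le_rfl, ht1.1⟩ ht ht.1
    have key := comp_ode (t0 := s2) (t1 := t1) (a := (n:ℝ)^2 - 1)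
      (fun s hs => F.uder s (hJo s hs) n hn0)
      (B := fun s => E / jb n ^ m * (2 * r * R s ^ (3 * p) - R s ^ (3 * p + 1)))
      (fun s hs => ((((F.Rder s (hJo s hs)).pow (3 * p)).const_mul (2 * r)).sub
        ((F.Rder s (hJo s hs)).pow (3 * p + 1))).const_mul (E / jb n ^ m))
      (fun s hs => hS s (hJo s hs))
      (fun s hs => by have := F.Rpos s (hJc s hs); positivity)
      (fun s hs => by
        have Rs := F.Rpos s (hJc s hs)
        have hNn := (hNb s (hI2 _ (hJ s hs))).norm_le n
        have hν1 := abs_le.1 (hν s (hI1 _ (hI2 _ (hJ s hs))))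
        have hν2 := abs_le.1 (hνb s (hI2 _ (hJ s hs)))
        have hRs1 : R s ≤ 1 := (hR2 s (hJ s hs)).le.trans (min_le_left _ _)
        have hRsr := hRr s hs
        set ν := (fCoeff (Nf p (u s) (y s)) 0).re with hνd
        have e1 : R s ^ (3 * p) = R s * R s ^ (3 * p - 1) := by
          rw [← pow_succ']; congr 1; have := F.pos; omega
        have e2 : R s ^ (3 * p + 1) = R s * R s ^ (3 * p) := pow_succ' _ _
        set σ := (R s ^ (p + 1))⁻¹ with hσ
        have hσp : 0 ≤ σ := by positivity
        set P := R s ^ (3 * p) with hP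
        set G := E / jb n ^ m with hG
        have hGp : 0 < G := by positivity
        have hPp : 0 < P := by positivity
        rw [show 3 * p + 1 - 1 = 3 * p by omega, ← hP, e2]
        have e3 : G * (2 * r * (((3 * p : ℕ):ℝ) * R s ^ (3 * p - 1) * -(σ * R s * (1 + ν) / p))
            - ((3 * p + 1 : ℕ):ℝ) * P * -(σ * R s * (1 + ν) / p)) =
            σ * (G * P * (-(1 + ν) * (3 * (2 * r) - 3 * R s - R s / p))) := by
          have : (p:ℝ) ≠ 0 := by positivity
          rw [e1]; push_cast; field_simp; ring
        rw [e3]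
        refine mul_le_mul_of_nonneg_left ?_ hσp
        have hb : ‖(((n:ℝ)^2 - 1 : ℝ) : ℂ) * (R s * fCoeff (Nf p (u s) (y s)) n / p)‖
            ≤ C1 * P * R s / jb n ^ m := by
          rw [norm_mul, norm_div, norm_mul, Complex.norm_real, Complex.norm_real, Complex.norm_natCast,
            Real.norm_of_nonneg (show (0:ℝ) ≤ (n:ℝ)^2 - 1 by linarith), Real.norm_of_nonneg Rs.le]
          calc ((n:ℝ)^2 - 1) * (R s * ‖fCoeff (Nf p (u s) (y s)) n‖ / p)
              ≤ jb n ^ 2 * (R s * ‖fCoeff (Nf p (u s) (y s)) n‖) := by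
                refine mul_le_mul hjn (div_le_self (by positivity) hp1) (by positivity) (by positivity)
            _ ≤ jb n ^ 2 * (R s * (C1 * P / jb n ^ (m + 2))) := by gcongr
            _ = C1 * P * R s / jb n ^ m := by rw [pow_add]; field_simp
        have hb2 : C1 * P * R s / jb n ^ m ≤ G * P * (R s / p / 4) := by
          rw [hG]
          have : C1 ≤ E / p / 4 := by
            rw [div_div, le_div_iff₀ (by positivity)]; linarith
          calc C1 * P * R s / jb n ^ m ≤ (E / p / 4) * P * R s / jb n ^ m := by gcongr
            _ = _ := by ring
        have hν3 : -ν * (3 * (2 * r) - 3 * R s) ≥ -(R s / p / 4) := by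
          have h1 : ν ≤ C1 * R s := hν2.2.trans (by
            have : P ≤ R s := by
              rw [hP]; exact pow_le_of_le_one Rs.le hRs1 (by have := F.pos; omega)
            gcongr)
          have h2 : ν * (3 * (2 * r) - 3 * R s) ≤ C1 * R s * (6 * r) := by
            calc ν * (3 * (2 * r) - 3 * R s) ≤ C1 * R s * (3 * (2 * r) - 3 * R s) := by
                  gcongr; linarith
              _ ≤ C1 * R s * (6 * r) := by gcongr; linarith
          have h3 : C1 * R s * (6 * r) ≤ R s / p / 4 := by
            rw [div_div, le_div_iff₀ (by positivity)]; nlinarith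
          linarith
        have hRp : 0 < R s / p := by positivity
        have hfin : -((n:ℝ)^2 - 1) * (G * (2 * r * P - R s * P)) ≤ -3 * (G * (2 * r * P - R s * P)) := by
          have : 0 ≤ G * (2 * r * P - R s * P) := by
            have : 0 ≤ (2 * r - R s) * P := mul_nonneg (by linarith) hPp.le
            exact mul_nonneg hGp.le (by linarith)
          nlinarith
        have hlast : -3 * (2 * r - R s) + R s / p / 4 ≤ -(1 + ν) * (3 * (2 * r) - 3 * R s - R s / p) := by
          nlinarith
        have := mul_le_mul_of_nonneg_left hlast (mul_pos hGp hPp).le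
        nlinarith)
      (by
        rw [norm_mul, Complex.norm_real, Real.norm_of_nonneg hrp.le]
        have h1 := hA.norm_le n
        calc r * ‖fCoeff (u s2) n‖ ≤ r * (A / jb n ^ m) := by gcongr
          _ ≤ r * (E * r ^ (3 * p) / jb n ^ m) := by gcongr
          _ = E / jb n ^ m * (2 * r * r ^ (3 * p) - r ^ (3 * p + 1)) := by ring)
      t1 ⟨ht1.1, le_rfl⟩
    rw [norm_mul, Complex.norm_real, Real.norm_of_nonneg Rt1.le] at key
    have e1 : R t1 ^ (3 * p) = R t1 * R t1 ^ (3 * p - 1) := by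
      rw [← pow_succ']; congr 1; have := F.pos; omega
    have h5 : R t1 * ‖fCoeff (u t1) n‖ ≤ R t1 * (2 * r * E * R t1 ^ (3 * p - 1) / jb n ^ m) := by
      refine key.trans ?_
      calc E / jb n ^ m * (2 * r * R t1 ^ (3 * p) - R t1 ^ (3 * p + 1)) ≤ E / jb n ^ m * (2 * r * R t1 ^ (3 * p)) := by
            gcongr; linarith [pow_pos Rt1 (3 * p + 1)]
        _ = _ := by rw [e1]; ring
    have := le_of_mul_le_mul_left h5 Rt1
    rw [le_div_iff₀ (by positivity)] at this
    linarith
  refine ⟨s2, ⟨by linarith [hs1.1, hs2.1], hs2.2⟩, max (4 * (2 * r * E)) C1, by positivity, fun t ht => ?_⟩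
  have htT := hI _ (hI1 _ (hI2 t ht))
  have Rt := F.Rpos t htT
  refine ⟨(hR2 t ht).le.trans (min_le_left _ _), ?_, (hνb t (hI2 t ht)).trans (by gcongr; exact le_max_right _ _)⟩
  have hsm' : 4 * KK m * (D0 * (R t / R t0) ^ q) ≤ 1 := by
    refine le_trans ?_ hKε
    refine mul_le_mul ?_ (hsm t (hI2 t ht)) (huD t (hI1 _ (hI2 t ht))).nonneg (by linarith [KK_one_le (m + 2)])
    linarith [KK_mono (show m ≤ m + 2 by omega)]
  refine (invm hm (F.spu t htT) (F.spy t htT) (F.inv t htT) (huD t (hI1 _ (hI2 t ht))) (hub t ht) hsm').mono ?_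
  calc _ = 4 * (2 * r * E) * R t ^ (3 * p - 1) := by ring
    _ ≤ _ := by gcongr; exact le_max_left _ _

end


theorem Bd.iter {f : ℝ → ℝ} (hf : SP f) {j : ℕ} {A : ℝ} (h : Bd (j + 2) f A) : Bd 2 (iteratedDeriv j f) A := by
  intro n
  refine le_trans ?_ (h n)
  rw [fCoeff_iter hf, norm_mul, norm_pow, norm_mul, Complex.norm_I, one_mul, Complex.norm_intCast, pow_add,
    mul_comm (jb n ^ j), mul_assoc]
  have := jb_pos n
  have h2 : |(n:ℝ)| ≤ jb n := le_max_right _ _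
  gcongr

theorem iter_affine {f : ℝ → ℝ} (X c : ℝ) (j : ℕ) (x : ℝ) :
    iteratedDeriv (j + 1) (fun x => X * f x + c) x = X * iteratedDeriv (j + 1) f x := by
  rw [iteratedDeriv_succ', iteratedDeriv_succ']
  have : deriv (fun x => X * f x + c) = fun x => X * deriv f x := by
    ext z; rw [deriv_add_const, deriv_const_mul_field]
  rw [this, iteratedDeriv_const_mul_field]

theorem pow_close {X : ℝ} (hX : 0 ≤ X) (p : ℕ) : |X - 1| ≤ |X ^ (p + 1) - 1| := by
  rcases le_total 1 X with h | h
  · have : X ≤ X ^ (p + 1) := le_self_pow₀ h (by omega)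
    rw [abs_of_nonneg (by linarith), abs_of_nonneg (by linarith)]; linarith
  · have : X ^ (p + 1) ≤ X := pow_le_of_le_one hX h (by omega)
    rw [abs_of_nonpos (by linarith), abs_of_nonpos (by linarith)]; linarith

noncomputable def Lam (p : ℕ) (T t : ℝ) : ℝ :=
  (((p : ℝ) + 1) / (p : ℝ)) ^ ((1 : ℝ) / ((p : ℝ) + 1)) * (T - t) ^ ((1 : ℝ) / ((p : ℝ) + 1))

theorem Lam_pow {p : ℕ} {T t : ℝ} (hp : 1 ≤ p) (ht : t < T) : Lam p T t ^ (p + 1) = (p + 1) / p * (T - t) := by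
  have h1 : (0:ℝ) ≤ T - t := by linarith
  have e : ((p:ℝ) + 1) = ((p + 1 : ℕ) : ℝ) := by push_cast; rfl
  unfold Lam
  rw [mul_pow, e, one_div, Real.rpow_inv_natCast_pow (by positivity) (by omega), Real.rpow_inv_natCast_pow h1 (by omega)]

theorem Lam_pos {p : ℕ} {T t : ℝ} (hp : 1 ≤ p) (ht : t < T) : 0 < Lam p T t := by
  have h1 : (0:ℝ) < T - t := by linarith
  have : (0:ℝ) < p := by exact_mod_cast hp
  unfold Lam
  exact mul_pos (Real.rpow_pos_of_pos (by positivity) _) (Real.rpow_pos_of_pos h1 _)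

section
variable {p : ℕ} {T : ℝ} {R : ℝ → ℝ} {u y : ℝ → ℝ → ℝ}

theorem lamEst (F : PFlow p T R u y) {s E : ℝ} (hs : s ∈ Ioo 0 T) (hE : 0 < E)
    (hRs : ∀ δ > 0, ∃ s' ∈ Ioo s T, ∀ t ∈ Ico s' T, R t < δ)
    (hν : ∀ t ∈ Ico s T, |(fCoeff (Nf p (u t) (y t)) 0).re| ≤ 1 / 20)
    (hνE : ∀ t ∈ Ico s T, |(fCoeff (Nf p (u t) (y t)) 0).re| ≤ E * R t ^ (3 * p)) :
    ∀ t ∈ Ico s T, |R t ^ (p + 1) - (p + 1) / p * (T - t)| ≤ E * R t ^ (3 * p) * ((p + 1) / p * (T - t)) := by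
  intro t ht
  have hp0 : (0:ℝ) < p := by exact_mod_cast F.pos
  have hs0 := hs.1
  have hlim : Tendsto R (nhdsWithin T (Iio T)) (nhds 0) := by
    rw [Metric.tendsto_nhds]
    intro δ hδ
    obtain ⟨s', hs', h⟩ := hRs δ hδ
    filter_upwards [Ioo_mem_nhdsLT hs'.2] with z hz
    have Rz := F.Rpos z ⟨by linarith [hz.1, hs'.1], hz.2⟩
    rw [Real.dist_eq, sub_zero, abs_of_pos Rz]
    exact h z ⟨hz.1.le, hz.2⟩
  have hlim2 : Tendsto (fun z => |(R z ^ (p + 1) + (p + 1) / p * z) - (R t ^ (p + 1) + (p + 1) / p * t)|)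
      (nhdsWithin T (Iio T)) (nhds |((0:ℝ) ^ (p + 1) + (p + 1) / p * T) - (R t ^ (p + 1) + (p + 1) / p * t)|) := by
    have hid : Tendsto (fun z : ℝ => z) (nhdsWithin T (Iio T)) (nhds T) := tendsto_id.mono_left nhdsWithin_le_nhds
    exact (((hlim.pow _).add (hid.const_mul _)).sub_const _).abs
  have hle : ∀ᶠ z in nhdsWithin T (Iio T),
      |(R z ^ (p + 1) + (p + 1) / p * z) - (R t ^ (p + 1) + (p + 1) / p * t)| ≤ E * R t ^ (3 * p) * ((p + 1) / p * (T - t)) := by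
    filter_upwards [Ioo_mem_nhdsLT ht.2] with z hz
    have hJ : ∀ w ∈ Icc t z, w ∈ Ico s T := fun w hw => ⟨ht.1.trans hw.1, lt_of_le_of_lt hw.2 hz.2⟩
    have hanti := antiR F (t0 := t) (t1 := z) (by linarith [ht.1]) hz.2
      (fun w hw => by linarith [(abs_le.1 (hν w (hJ w hw))).1])
    have hR0 := F.Rpos t ⟨by linarith [ht.1], ht.2⟩
    have := Convex.norm_image_sub_le_of_norm_hasDerivWithin_le (s := Icc t z)
      (f := fun z => R z ^ (p + 1) + (p + 1) / p * z)
      (f' := fun w => -((p + 1) / p * (fCoeff (Nf p (u w) (y w)) 0).re))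
      (C := E * R t ^ (3 * p) * ((p + 1) / p)) (x := t) (y := z) (fun w hw => by
        have Rw := F.Rpos w ⟨by linarith [ht.1, hw.1], (hJ w hw).2⟩
        refine HasDerivAt.hasDerivWithinAt ?_
        have := ((F.Rder w ⟨by linarith [ht.1, hw.1], (hJ w hw).2⟩).pow (p + 1)).add ((hasDerivAt_id w).const_mul (((p:ℝ) + 1) / p))
        refine this.congr_deriv ?_
        rw [show p + 1 - 1 = p by omega, pow_succ]
        push_cast
        field_simp
        ring) (fun w hw => by
        have Rw := F.Rpos w ⟨by linarith [ht.1, hw.1], (hJ w hw).2⟩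
        rw [norm_neg, norm_mul, Real.norm_eq_abs, Real.norm_eq_abs, abs_of_nonneg (show (0:ℝ) ≤ (p + 1) / p by positivity), mul_comm]
        have h1 := hνE w (hJ w hw)
        have h2 : R w ≤ R t := hanti ⟨le_rfl, hz.1.le⟩ hw hw.1
        have h3 : R w ^ (3 * p) ≤ R t ^ (3 * p) := by gcongr
        have : |(fCoeff (Nf p (u w) (y w)) 0).re| ≤ E * R t ^ (3 * p) := h1.trans (by gcongr)
        gcongr) (convex_Icc _ _) ⟨le_rfl, hz.1.le⟩ ⟨hz.1.le, le_rfl⟩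
    rw [Real.norm_eq_abs, Real.norm_eq_abs] at this
    refine this.trans ?_
    rw [abs_of_nonneg (by linarith [hz.1]), mul_assoc]
    have := hz.2
    gcongr
  have := le_of_tendsto hlim2 hle
  rw [zero_pow (by omega), zero_add, abs_sub_comm] at this
  rwa [show R t ^ (p + 1) - (p + 1) / p * (T - t) = R t ^ (p + 1) + (p + 1) / p * t - (p + 1) / p * T by ring]

theorem late (F : PFlow p T R u y) {t0 a D0 : ℝ} (h0 : t0 ∈ Ioo 0 T)
    (ha : 4 * KK 2 * a ≤ 1) (hD0 : 0 < D0)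
    (hν : ∀ t ∈ Ico t0 T, |(fCoeff (Nf p (u t) (y t)) 0).re| ≤ 1 / 20)
    (hua : ∀ t ∈ Ico t0 T, Bd 2 (u t) a)
    (huD : ∀ t ∈ Ico t0 T, Bd 2 (u t) (D0 * (R t / R t0) ^ (3 / 2 * p : ℝ))) (l : ℕ) :
    ∃ s ∈ Ioo 0 T, ∃ C > (0:ℝ), ∀ t ∈ Ico s T, ∀ j ≤ l, ∀ x,
      |iteratedDeriv j (fun x => Lam p T t * ((1 + y t x) / R t) - 1) x| ≤ C * Lam p T t ^ (3 * p - 1) := by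
  obtain ⟨s1, hs1, E, hE, h1⟩ := sharp F (m := l + 2) (by omega) h0 ha hD0 hν hua huD
  have hp1 := F.pos
  have h00 := h0.1
  have hI1 : ∀ t ∈ Ico s1 T, t ∈ Ico t0 T := fun t ht => ⟨hs1.1.le.trans ht.1, ht.2⟩
  have hs1' : s1 ∈ Ioo 0 T := ⟨by linarith [hs1.1], hs1.2⟩
  have hsm : ∀ δ > 0, ∃ s' ∈ Ioo s1 T, ∀ t ∈ Ico s' T, R t < δ := fun δ hδ =>
    R_small F hs1' ha (fun t ht => hua t (hI1 t ht)) hδ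
  have hL := lamEst F hs1' hE hsm (fun t ht => hν t (hI1 t ht)) (fun t ht => (h1 t ht).2.2)
  obtain ⟨s, hs, h2⟩ := hsm (1 / (2 * E)) (by positivity)
  have hZ := Z0_one_le
  refine ⟨s, ⟨by linarith [hs.1, hs1'.1], hs.2⟩, 4 * Z0 * E * 2 ^ (3 * p - 1), by positivity, fun t ht j hj x => ?_⟩
  have ht1 : t ∈ Ico s1 T := ⟨hs.1.le.trans ht.1, ht.2⟩
  have htT : t ∈ Ico 0 T := ⟨hs1'.1.le.trans ht1.1, ht.2⟩
  have Rt := F.Rpos t htT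
  obtain ⟨hR1, hy, -⟩ := h1 t ht1
  have hER : E * R t ^ (3 * p) ≤ 1 / 2 := by
    have e1 : R t ^ (3 * p) ≤ R t := pow_le_of_le_one Rt.le hR1 (by omega)
    have e2 := (h2 t ht).le
    rw [le_div_iff₀ (by positivity)] at e2
    nlinarith
  have hLt := hL t ht1
  have hΛ := Lam_pos (p := p) hp1 ht.2
  rw [← Lam_pow hp1 ht.2] at hLt
  set Λ := Lam p T t with hΛd
  set X := Λ / R t with hX
  have hXp : 0 < X := by positivity
  have hX1 : |1 - X ^ (p + 1)| ≤ E * R t ^ (3 * p) * X ^ (p + 1) := by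
    have hRp : 0 < R t ^ (p + 1) := by positivity
    rw [hX, div_pow]
    rw [show 1 - Λ ^ (p + 1) / R t ^ (p + 1) = (R t ^ (p + 1) - Λ ^ (p + 1)) / R t ^ (p + 1) by field_simp, abs_div, abs_of_pos hRp,
      ← mul_div_assoc]
    gcongr
  have hXpp : 0 < X ^ (p + 1) := by positivity
  have hX2 : X ^ (p + 1) ≤ 2 := by
    have := (abs_le.1 hX1).1
    nlinarith
  have hX3 : |X - 1| ≤ 2 * E * R t ^ (3 * p) := by
    refine (pow_close hXp.le p).trans ?_
    rw [abs_sub_comm]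
    refine hX1.trans ?_
    have : 0 < E * R t ^ (3 * p) := by positivity
    nlinarith
  have hX4 : X ≤ 2 := by have := (abs_le.1 hX3).2; linarith
  have hX5 : 1 / 2 ≤ X := by
    by_contra hcon
    push Not at hcon
    have e1 : X ^ (p + 1) ≤ X := pow_le_of_le_one hXp.le (by linarith) (by omega)
    have := (abs_le.1 hX1).2
    nlinarith
  have hR2 : R t ≤ 2 * Λ := by
    rw [hX, le_div_iff₀ Rt] at hX5; linarith
  have hyj : |iteratedDeriv j (y t) x| ≤ E * R t ^ (3 * p - 1) * Z0 :=
    sup_leZ ((F.spy t htT).iter j) (Bd.iter (F.spy t htT) (hy.low (by omega))) x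
  have hfun : (fun x => Λ * ((1 + y t x) / R t) - 1) = fun x => X * y t x + (X - 1) := by
    ext z; rw [hX]; ring
  rw [hfun]
  have hQ : R t ^ (3 * p - 1) ≤ 2 ^ (3 * p - 1) * Λ ^ (3 * p - 1) := by
    rw [← mul_pow]; gcongr
  have hQp : 0 < R t ^ (3 * p - 1) := by positivity
  have hfin : |iteratedDeriv j (fun x => X * y t x + (X - 1)) x| ≤ 4 * Z0 * E * R t ^ (3 * p - 1) := by
    have h6 : X * |iteratedDeriv j (y t) x| ≤ 2 * (E * R t ^ (3 * p - 1) * Z0) := by gcongr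
    cases j with
    | zero =>
      simp only [iteratedDeriv_zero] at h6 ⊢
      have h7 : R t ^ (3 * p) ≤ R t ^ (3 * p - 1) := pow_le_pow_of_le_one Rt.le hR1 (by omega)
      calc |X * y t x + (X - 1)| ≤ |X * y t x| + |X - 1| := abs_add_le _ _
        _ = X * |y t x| + |X - 1| := by rw [abs_mul, abs_of_pos hXp]
        _ ≤ 2 * (E * R t ^ (3 * p - 1) * Z0) + 2 * E * R t ^ (3 * p - 1) * Z0 := by
          refine add_le_add h6 (hX3.trans ?_)
          calc 2 * E * R t ^ (3 * p) ≤ 2 * E * R t ^ (3 * p - 1) := by gcongr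
            _ ≤ _ := le_mul_of_one_le_right (by positivity) hZ
        _ = _ := by ring
    | succ j =>
      rw [iter_affine, abs_mul, abs_of_pos hXp]
      refine h6.trans ?_
      have : 0 ≤ E * R t ^ (3 * p - 1) * Z0 := by positivity
      linarith
  refine hfin.trans ?_
  calc 4 * Z0 * E * R t ^ (3 * p - 1) ≤ 4 * Z0 * E * (2 ^ (3 * p - 1) * Λ ^ (3 * p - 1)) := by gcongr
    _ = _ := by ring

end


/-- jointly smooth, periodic in space -/
def JS (T : ℝ) (g : ℝ → ℝ → ℝ) : Prop :=
  ContDiffOn ℝ (⊤ : ℕ∞) (fun q : ℝ × ℝ => g q.1 q.2) (Set.univ ×ˢ Set.Ico 0 T) ∧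
  ∀ t ∈ Ico 0 T, ∀ θ, g (θ + 2 * Real.pi) t = g θ t

section
variable {T : ℝ} {g h : ℝ → ℝ → ℝ}

theorem JS.sp (hg : JS T g) {t : ℝ} (ht : t ∈ Ico 0 T) : SP (fun x => g x t) := by
  refine ⟨?_, hg.2 t ht⟩
  rw [← contDiffOn_univ]
  refine hg.1.comp (f := fun x : ℝ => (x, t)) (by fun_prop) ?_
  intro x _; exact ⟨mem_univ _, ht⟩

theorem JS.deriv (hg : JS T g) : JS T (fun θ t => deriv (fun x => g x t) θ) := by
  refine ⟨?_, fun t ht θ => (hg.sp ht).deriv.2 θ⟩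
  have hu : UniqueDiffOn ℝ ((Set.univ : Set ℝ) ×ˢ Set.Ico 0 T) := uniqueDiffOn_univ.prod (uniqueDiffOn_Ico 0 T)
  have h1 : ContDiffOn ℝ (⊤ : ℕ∞) (fun q => fderivWithin ℝ (fun q : ℝ × ℝ => g q.1 q.2) (univ ×ˢ Ico 0 T) q ((1:ℝ), (0:ℝ)))
      (univ ×ˢ Ico 0 T) :=
    (hg.1.fderivWithin hu (m := (⊤ : ℕ∞)) (by simp)).clm_apply contDiffOn_const
  refine h1.congr fun q hq => ?_
  have hd : HasFDerivWithinAt (fun q : ℝ × ℝ => g q.1 q.2)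
      (fderivWithin ℝ (fun q : ℝ × ℝ => g q.1 q.2) (univ ×ˢ Ico 0 T) q) (univ ×ˢ Ico 0 T) q :=
    ((hg.1.differentiableOn (by simp)) q hq).hasFDerivWithinAt
  have hl : HasDerivWithinAt (fun x : ℝ => (x, q.2)) ((1:ℝ), (0:ℝ)) univ q.1 :=
    ((hasDerivAt_id q.1).prodMk (hasDerivAt_const q.1 q.2)).hasDerivWithinAt
  have := HasFDerivWithinAt.comp_hasDerivWithinAt (l := fun q : ℝ × ℝ => g q.1 q.2) (f := fun x : ℝ => (x, q.2)) q.1 (t := univ ×ˢ Ico 0 T) hd hl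
    (fun x _ => ⟨mem_univ _, hq.2⟩)
  rw [hasDerivWithinAt_univ] at this
  exact this.deriv

theorem JS.iter (hg : JS T g) (j : ℕ) : JS T (fun θ t => iteratedDeriv j (fun x => g x t) θ) := by
  induction j with
  | zero => simpa using hg
  | succ j ih => simpa only [iteratedDeriv_succ] using ih.deriv

theorem JS.inv (hg : JS T g) (h : ∀ θ, ∀ t ∈ Ico 0 T, g θ t ≠ 0) : JS T (fun θ t => (g θ t)⁻¹) :=
  ⟨hg.1.inv fun q hq => h q.1 q.2 hq.2, fun t ht θ => by simp only [hg.2 t ht θ]⟩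

theorem JS.pow (hg : JS T g) (p : ℕ) (c : ℝ) : JS T (fun θ t => c * g θ t ^ p) :=
  ⟨contDiffOn_const.mul (hg.1.pow p), fun t ht θ => by simp only [hg.2 t ht θ]⟩

theorem JS.add (hg : JS T g) (hh : JS T h) : JS T (fun θ t => g θ t + h θ t) :=
  ⟨hg.1.add hh.1, fun t ht θ => by simp only [hg.2 t ht θ, hh.2 t ht θ]⟩

theorem JS.neg (hg : JS T g) : JS T (fun θ t => - g θ t) :=
  ⟨hg.1.neg, fun t ht θ => by simp only [hg.2 t ht θ]⟩

theorem JS.bdd (hg : JS T g) {t1 : ℝ} (ht1 : t1 < T) : ∃ A, 0 ≤ A ∧ ∀ t ∈ Icc 0 t1, ∀ x, |g x t| ≤ A := by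
  have hsub : (Icc (0:ℝ) (2 * Real.pi)) ×ˢ Icc 0 t1 ⊆ univ ×ˢ Ico 0 T := fun q hq =>
    ⟨mem_univ _, hq.2.1, lt_of_le_of_lt hq.2.2 ht1⟩
  obtain ⟨A, hA⟩ := ((isCompact_Icc (a := (0:ℝ)) (b := 2 * Real.pi)).prod (isCompact_Icc (a := (0:ℝ)) (b := t1))).exists_bound_of_continuousOn
    (hg.1.continuousOn.mono hsub)
  refine ⟨max A 0, le_max_right _ _, fun t ht x => ?_⟩
  obtain ⟨z, hz, e⟩ := Function.Periodic.exists_mem_Ico₀ (f := fun x => g x t) (c := 2 * Real.pi)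
    (hg.2 t ⟨ht.1, lt_of_le_of_lt ht.2 ht1⟩) (by positivity) x
  have e' : g x t = g z t := e
  rw [e']
  exact (hA (z, t) ⟨⟨hz.1, hz.2.le⟩, ht⟩).trans (le_max_left _ _)

theorem JS.tcont (hg : JS T g) (θ : ℝ) : ContinuousOn (fun t => g θ t) (Ico 0 T) :=
  hg.1.continuousOn.comp (f := fun t : ℝ => (θ, t)) (by fun_prop) (fun t ht => ⟨mem_univ _, ht⟩)

theorem norm_ex' (n : ℤ) (x : ℝ) : ‖Complex.exp (-(Complex.I * n * x))‖ = 1 := by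
  rw [show -(Complex.I * n * (x:ℂ)) = ((-(n * x) : ℝ) : ℂ) * Complex.I by push_cast; ring,
        Complex.norm_exp_ofReal_mul_I]

theorem JS.fcont (hg : JS T g) (n : ℤ) : ContinuousOn (fun t => fCoeff (fun x => g x t) n) (Ico 0 T) := by
  intro t ht
  unfold fCoeff
  refine continuousWithinAt_const.mul ?_
  have ht2 := ht.2
  obtain ⟨A, -, hA⟩ := hg.bdd (t1 := (t + T) / 2) (by linarith)
  refine intervalIntegral.continuousWithinAt_of_dominated_interval (bound := fun _ => A) ?_ ?_ (by simp) ?_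
  · filter_upwards [self_mem_nhdsWithin] with s hs
    have := (hg.sp hs).cont
    exact Continuous.aestronglyMeasurable (by fun_prop)
  · filter_upwards [self_mem_nhdsWithin, nhdsWithin_le_nhds (Iio_mem_nhds (show t < (t + T) / 2 by linarith))] with s hs hs2
    refine Eventually.of_forall fun x _ => ?_
    rw [norm_mul, norm_ex', mul_one, Complex.norm_real]
    exact hA s ⟨hs.1, le_of_lt hs2⟩ x
  · refine Eventually.of_forall fun x _ => ?_
    refine ContinuousWithinAt.mul ?_ continuousWithinAt_const
    exact Complex.continuous_ofReal.continuousAt.comp_continuousWithinAt (hg.tcont x t ht)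

theorem JS.fder (hg : JS T g) (hh : JS T h) (hd : ∀ θ, ∀ t ∈ Ioo 0 T, HasDerivAt (fun s => g θ s) (h θ t) t)
    (n : ℤ) {t : ℝ} (ht : t ∈ Ioo 0 T) :
    HasDerivAt (fun t => fCoeff (fun x => g x t) n) (fCoeff (fun x => h x t) n) t := by
  unfold fCoeff
  refine HasDerivAt.const_mul _ ?_
  have ht1 := ht.1
  have ht2 := ht.2
  obtain ⟨A, -, hA⟩ := hh.bdd (t1 := (t + T) / 2) (by linarith)
  have hc : t ∈ Ico 0 T := ⟨ht1.le, ht2⟩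
  refine (intervalIntegral.hasDerivAt_integral_of_dominated_loc_of_deriv_le (bound := fun _ => A)
    (F := fun t x => (g x t : ℂ) * Complex.exp (-(Complex.I * n * x)))
    (F' := fun t x => (h x t : ℂ) * Complex.exp (-(Complex.I * n * x)))
    (s := Ioo 0 ((t + T) / 2)) (Ioo_mem_nhds ht1 (by linarith)) ?_ ?_ ?_ ?_ intervalIntegrable_const ?_).2
  · filter_upwards [Ioo_mem_nhds ht1 ht2] with s hs
    have := (hg.sp ⟨hs.1.le, hs.2⟩).cont
    exact Continuous.aestronglyMeasurable (by fun_prop)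
  · exact fC_int (hg.sp hc).cont n _ _
  · have := (hh.sp hc).cont
    exact Continuous.aestronglyMeasurable (by fun_prop)
  · refine Eventually.of_forall fun x _ s hs => ?_
    rw [norm_mul, norm_ex', mul_one, Complex.norm_real]
    exact hA s ⟨hs.1.le, hs.2.le⟩ x
  · refine Eventually.of_forall fun x _ s hs => ?_
    exact (hd x s ⟨hs.1, by linarith [hs.2]⟩).ofReal_comp.mul_const _

end

theorem fCoeff_zero (f : ℝ → ℝ) : fCoeff f 0 = (((1 / (2 * Real.pi)) * ∫ θ in (0:ℝ)..(2 * Real.pi), f θ : ℝ) : ℂ) := by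
  unfold fCoeff
  push_cast
  rw [← intervalIntegral.integral_ofReal]
  simp

theorem fCoeff_const (c : ℝ) (n : ℤ) : fCoeff (fun _ => c) n = if n = 0 then (c:ℂ) else 0 := by
  split_ifs with h
  · subst h; rw [fCoeff_zero]
    have := Real.pi_pos
    simp only [intervalIntegral.integral_const, sub_zero, smul_eq_mul]
    push_cast
    field_simp
  · have h1 := fCoeff_deriv (SP.const c) n
    have h2 : deriv (fun _ : ℝ => c) = fun x => (0:ℝ) * (fun _ => c) x := by ext; simp
    rw [h2, fCoeff_smul] at h1
    have : (n:ℂ) ≠ 0 := by exact_mod_cast h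
    simpa [this, Complex.I_ne_zero] using h1.symm

theorem fCoeff_neg_conj (f : ℝ → ℝ) (n : ℤ) : fCoeff f (-n) = (starRingEnd ℂ) (fCoeff f n) := by
  unfold fCoeff
  rw [map_mul, intervalIntegral.integral_of_le (by positivity), intervalIntegral.integral_of_le (by positivity), ← integral_conj]
  congr 1
  · simp [map_ofNat]
  · congr 1; ext θ
    rw [map_mul, ← Complex.exp_conj]
    simp


noncomputable def Rof (k : ℝ → ℝ → ℝ) (t : ℝ) : ℝ := (fCoeff (fun x => (k x t)⁻¹) 0).re
noncomputable def uof (k : ℝ → ℝ → ℝ) (t x : ℝ) : ℝ := (Rof k t)⁻¹ * (k x t)⁻¹ + (-1)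
noncomputable def yof (k : ℝ → ℝ → ℝ) (t x : ℝ) : ℝ := Rof k t * k x t + (-1)

section
variable {p : ℕ} {T : ℝ} {k : ℝ → ℝ → ℝ} {ψ : ℝ → ℝ}

theorem vder (hp : 1 ≤ p) {f : ℝ → ℝ} (hf : SP f) (x : ℝ) :
    deriv (deriv (fun x => 1 / (p:ℝ) * f x ^ p)) x =
      f x ^ (p - 1) * deriv (deriv f) x + ((p:ℝ) - 1) * f x ^ (p - 2) * (deriv f x) ^ 2 := by
  have hp0 : (p:ℝ) ≠ 0 := by have : p ≠ 0 := by omega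
                             exact_mod_cast this
  have hd : ∀ x, HasDerivAt f (deriv f x) x := fun x => ((hf.1.differentiable (by simp)) x).hasDerivAt
  have hd2 : ∀ x, HasDerivAt (deriv f) (deriv (deriv f) x) x := fun x =>
    ((hf.deriv.1.differentiable (by simp)) x).hasDerivAt
  have h1 : deriv (fun x => 1 / (p:ℝ) * f x ^ p) = fun x => f x ^ (p - 1) * deriv f x := by
    ext z
    refine (((hd z).pow p).const_mul (1 / (p:ℝ))).deriv.trans ?_
    field_simp
  rw [h1]
  have := (((hd x).pow (p - 1)).mul (hd2 x)).deriv
  have e : (fun x => f x ^ (p - 1) * deriv f x) = (f ^ (p - 1)) * deriv f := rfl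
  rw [e, this]
  simp only [Pi.pow_apply]
  rw [Nat.cast_sub hp, show p - 1 - 1 = p - 2 by omega]
  push_cast
  ring

theorem mkFlow (hp : 1 ≤ p) (hT : 0 < T) (H : IsPCSF p T k ψ) : PFlow p T (Rof k) (uof k) (yof k) := by
  obtain ⟨hsm, hper, hpos, hpde, -, -, -, -, hblow, hclo⟩ := H
  have hp0 : (p:ℝ) ≠ 0 := by have : p ≠ 0 := by omega
                             exact_mod_cast this
  have hk : JS T k := ⟨hsm, fun t _ θ => hper θ t⟩
  have hρ : JS T (fun θ t => (k θ t)⁻¹) := hk.inv fun θ t ht => (hpos θ t ht).ne'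
  have hR0 : ∀ t, fCoeff (fun x => (k x t)⁻¹) 0 = (Rof k t : ℂ) := by
    intro t
    unfold Rof; rw [fCoeff_zero]; simp
  have hRpos : ∀ t ∈ Ico 0 T, 0 < Rof k t := by
    intro t ht
    have e := hR0 t
    rw [fCoeff_zero] at e
    rw [← Complex.ofReal_inj.1 e]
    have hpi := Real.pi_pos
    refine mul_pos (by positivity) (intervalIntegral.intervalIntegral_pos_of_pos_on
      ((hρ.sp ht).cont.intervalIntegrable _ _) (fun x _ => inv_pos.2 (hpos x t ht)) (by positivity))
  have hRc : ContinuousOn (Rof k) (Ico 0 T) := Complex.continuous_re.comp_continuousOn (hρ.fcont 0)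
  have hspu : ∀ t ∈ Ico 0 T, SP (uof k t) := fun t ht => ((hρ.sp ht).smul _).add (SP.const _)
  have hspy : ∀ t ∈ Ico 0 T, SP (yof k t) := fun t ht => ((hk.sp ht).smul _).add (SP.const _)
  have huC : ∀ t ∈ Ico 0 T, ∀ n, fCoeff (uof k t) n = ((Rof k t)⁻¹ : ℝ) * fCoeff (fun x => (k x t)⁻¹) n
      + fCoeff (fun _ => (-1:ℝ)) n := by
    intro t ht n
    unfold uof
    rw [fCoeff_add ((hρ.sp ht).smul _).cont (SP.const (-1)).cont, fCoeff_smul]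
  have hu0 : ∀ t ∈ Ico 0 T, fCoeff (uof k t) 0 = 0 := by
    intro t ht
    rw [huC t ht, hR0, fCoeff_const, if_pos rfl]
    have : (Rof k t : ℂ) ≠ 0 := by exact_mod_cast (hRpos t ht).ne'
    push_cast
    field_simp
    ring
  have hRu : ∀ t ∈ Ico 0 T, ∀ n : ℤ, n ≠ 0 → (Rof k t : ℂ) * fCoeff (uof k t) n = fCoeff (fun x => (k x t)⁻¹) n := by
    intro t ht n hn
    rw [huC t ht, fCoeff_const, if_neg hn]
    have : (Rof k t : ℂ) ≠ 0 := by exact_mod_cast (hRpos t ht).ne'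
    push_cast
    field_simp
    ring
  have hv : JS T (fun θ t => 1 / (p:ℝ) * k θ t ^ p) := hk.pow p _
  have hvv : JS T (fun θ t => -(deriv (deriv (fun x => 1 / (p:ℝ) * k x t ^ p)) θ + 1 / (p:ℝ) * k θ t ^ p)) :=
    (hv.deriv.deriv.add hv).neg
  have hder : ∀ θ, ∀ t ∈ Ioo 0 T, HasDerivAt (fun s => (k θ s)⁻¹)
      (-(deriv (deriv (fun x => 1 / (p:ℝ) * k x t ^ p)) θ + 1 / (p:ℝ) * k θ t ^ p)) t := by
    intro θ t ht
    have htc : t ∈ Ico 0 T := ⟨ht.1.le, ht.2⟩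
    have hk0 := (hpos θ t htc).ne'
    refine ((hpde θ t htc).inv hk0).congr_deriv ?_
    rw [vder hp (hk.sp htc)]
    rw [neg_div, mul_div_cancel_left₀ _ (pow_ne_zero 2 hk0)]
  have hfd := fun n {t : ℝ} (ht : t ∈ Ioo 0 T) => hρ.fder hvv hder n ht
  have hfv : ∀ t ∈ Ico 0 T, ∀ n : ℤ,
      fCoeff (fun θ => -(deriv (deriv (fun x => 1 / (p:ℝ) * k x t ^ p)) θ + 1 / (p:ℝ) * k θ t ^ p)) n
      = ((n:ℂ)^2 - 1) * fCoeff (fun x => 1 / (p:ℝ) * k x t ^ p) n := by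
    intro t ht n
    have e : (fun θ => -(deriv (deriv (fun x => 1 / (p:ℝ) * k x t ^ p)) θ + 1 / (p:ℝ) * k θ t ^ p)) =
      fun θ => (-1) * (fun θ => deriv (deriv (fun x => 1 / (p:ℝ) * k x t ^ p)) θ + (fun θ => 1 / (p:ℝ) * k θ t ^ p) θ) θ := by
      ext; ring
    have hs := hv.sp ht
    rw [e, fCoeff_smul, fCoeff_add hs.deriv.deriv.cont hs.cont, fCoeff_deriv hs.deriv, fCoeff_deriv hs]
    push_cast
    linear_combination (-(n:ℂ)^2 * fCoeff (fun x => 1 / (p:ℝ) * k x t ^ p) n) * Complex.I_sq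
  have hvN : ∀ t ∈ Ico 0 T, ∀ n : ℤ, fCoeff (fun x => 1 / (p:ℝ) * k x t ^ p) n =
      ((1 / p * ((Rof k t) ^ p)⁻¹ : ℝ) : ℂ) * (fCoeff (Nf p (uof k t) (yof k t)) n - p * fCoeff (uof k t) n
        + if n = 0 then 1 else 0) := by
    intro t ht n
    have hR := (hRpos t ht).ne'
    have hN := Nf_SP (p := p) (hspu t ht) (hspy t ht)
    have e : (fun x => 1 / (p:ℝ) * k x t ^ p) = fun x => (1 / p * ((Rof k t) ^ p)⁻¹) *
        (fun x => (fun x => Nf p (uof k t) (yof k t) x + (fun x => (-(p:ℝ)) * uof k t x) x) x + (fun _ => (1:ℝ)) x) x := by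
      ext x
      simp only [Nf, yof]
      rw [show 1 + (Rof k t * k x t + -1) = Rof k t * k x t by ring, mul_pow]
      field_simp
      ring
    rw [e, fCoeff_smul, fCoeff_add (hN.add ((hspu t ht).smul _)).cont (SP.const 1).cont,
      fCoeff_add hN.cont ((hspu t ht).smul _).cont, fCoeff_smul, fCoeff_const]
    push_cast
    split_ifs <;> ring
  refine ⟨hp, hT, hRpos, hspu, hspy, ?_, ?_, ?_, ?_, ?_, ?_, ?_⟩
  · intro t ht x
    have := (hRpos t ht).ne'
    have := (hpos x t ht).ne'
    unfold uof yof
    field_simp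
    ring
  · intro t ht
    have htc : t ∈ Ico 0 T := ⟨ht.1.le, ht.2⟩
    have h1 := hfd 0 ht
    rw [hfv t htc, hvN t htc, hu0 t htc, if_pos rfl] at h1
    have h2 := Complex.reCLM.hasFDerivAt.comp_hasDerivAt t h1
    refine h2.congr_deriv ?_
    have hR := (hRpos t htc).ne'
    simp only [Complex.reCLM_apply, Int.cast_zero, mul_zero, sub_zero]
    rw [show ((0:ℂ) ^ 2 - 1) * (((1 / p * ((Rof k t) ^ p)⁻¹ : ℝ) : ℂ) * (fCoeff (Nf p (uof k t) (yof k t)) 0 + 1)) =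
      ((-(1 / p * ((Rof k t) ^ p)⁻¹) : ℝ) : ℂ) * (fCoeff (Nf p (uof k t) (yof k t)) 0 + 1) by push_cast; ring,
      Complex.re_ofReal_mul, Complex.add_re, Complex.one_re, pow_succ]
    field_simp
    ring
  · intro t ht n hn
    have htc : t ∈ Ico 0 T := ⟨ht.1.le, ht.2⟩
    have h1 := hfd n ht
    rw [hfv t htc, hvN t htc, if_neg hn] at h1
    have h2 : HasDerivAt (fun s => (Rof k s : ℂ) * fCoeff (uof k s) n) _ t := h1.congr_of_eventuallyEq (by
      filter_upwards [Ioo_mem_nhds ht.1 ht.2] with s hs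
      exact hRu s ⟨hs.1.le, hs.2⟩ n hn)
    refine h2.congr_deriv ?_
    have hR : (Rof k t : ℂ) ≠ 0 := by exact_mod_cast (hRpos t htc).ne'
    have hpc : (p:ℂ) ≠ 0 := by exact_mod_cast hp0
    push_cast
    rw [pow_succ]
    field_simp
    ring
  · intro t ht n hn
    have hm1 : fCoeff (fun x => (k x t)⁻¹) (-1) = 0 := by
      unfold fCoeff
      have := hclo t ht
      rw [mul_eq_zero]; right
      rw [← this]
      congr 1; ext θ
      push_cast
      rw [show -(Complex.I * -1 * θ) = Complex.I * θ by ring]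
      rw [div_eq_mul_inv, mul_comm]
    have h1 : fCoeff (fun x => (k x t)⁻¹) 1 = 0 := by
      have := fCoeff_neg_conj (fun x => (k x t)⁻¹) (-1)
      rw [hm1] at this
      simpa using this
    rcases (by rw [abs_le] at hn; omega : n = 0 ∨ n = 1 ∨ n = -1) with rfl | rfl | rfl
    · exact hu0 t ht
    · rw [huC t ht, h1, fCoeff_const, if_neg (by norm_num)]; simp
    · rw [huC t ht, hm1, fCoeff_const, if_neg (by norm_num)]; simp
  · intro m t1 ht1
    obtain ⟨A, hA0, hA⟩ := hρ.bdd ht1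
    obtain ⟨B, hB0, hB⟩ := (hρ.iter m).bdd ht1
    have hsub : Icc 0 t1 ⊆ Ico 0 T := fun t ht => ⟨ht.1, lt_of_le_of_lt ht.2 ht1⟩
    obtain ⟨K, hK⟩ := isCompact_Icc.exists_bound_of_continuousOn
      ((hRc.mono hsub).inv₀ fun t ht => (hRpos t (hsub ht)).ne')
    obtain ⟨D, hD0, hD⟩ := (SP.const (-1)).exists_Bd m
    refine ⟨K * max A B + D, fun t ht => ?_⟩
    have hs := hρ.sp (hsub ht)
    have h1 : Bd m (fun x => (k x t)⁻¹) (max A B) := Bd_of_bounds hs m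
      (fun x => (hA t ht x).trans (le_max_left _ _)) (fun x => (hB t ht x).trans (le_max_right _ _))
    refine (Bd.add (hs.smul (Rof k t)⁻¹) (SP.const (-1)) (h1.smul _) hD).mono ?_
    have := hK t ht
    rw [Real.norm_eq_abs] at this
    have h3 := h1.nonneg
    gcongr
    exact this
  · intro n
    refine ContinuousOn.congr ?_ (fun t ht => huC t ht n)
    refine ContinuousOn.add (ContinuousOn.mul ?_ (hρ.fcont n)) continuousOn_const
    exact Complex.continuous_ofReal.comp_continuousOn (hRc.inv₀ fun t ht => (hRpos t ht).ne')
  · intro B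
    filter_upwards [hblow.eventually (eventually_gt_atTop B), Ioo_mem_nhdsLT hT] with t ht htT
    have : Nonempty (Icc (0:ℝ) (2 * Real.pi)) := ⟨⟨0, le_rfl, by positivity⟩⟩
    obtain ⟨x, hx⟩ := exists_lt_of_lt_ciSup ht
    refine ⟨x, hx.trans_le (le_of_eq ?_)⟩
    have hR := (hRpos t ⟨htT.1.le, htT.2⟩).ne'
    unfold yof
    field_simp
    ring

end


theorem semi_le {f : ℝ → ℝ} (hf : SP f) (n : ℤ) : (n:ℝ)^2 * ‖fCoeff f n‖ ≤ 2 * seminorm2 f := by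
  obtain ⟨A, -, hA⟩ := hf.exists_Bd 2
  have hn : ∀ n : ℤ, (n:ℝ)^2 ≤ jb n ^ 2 := fun n => by
    rw [← sq_abs]; exact pow_le_pow_left₀ (abs_nonneg _) (le_max_right _ _) 2
  have hle : ∀ (z : ℤ → ℝ), (∀ n, |z n| ≤ ‖fCoeff f n‖) → BddAbove (range fun n : ℤ => (n:ℝ)^2 * |z n|) := by
    rintro z hz
    refine ⟨A, ?_⟩
    rintro _ ⟨n, rfl⟩
    exact (mul_le_mul (hn n) (hz n) (abs_nonneg _) (by positivity)).trans (hA n)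
  have h1 : (n:ℝ)^2 * |(fCoeff f n).re| ≤ seminorm2 f :=
    (le_ciSup (hle (fun n => (fCoeff f n).re) fun n => Complex.abs_re_le_norm _) n).trans (le_max_left _ _)
  have h2 : (n:ℝ)^2 * |(fCoeff f n).im| ≤ seminorm2 f :=
    (le_ciSup (hle (fun n => (fCoeff f n).im) fun n => Complex.abs_im_le_norm _) n).trans (le_max_right _ _)
  calc (n:ℝ)^2 * ‖fCoeff f n‖ ≤ (n:ℝ)^2 * (|(fCoeff f n).re| + |(fCoeff f n).im|) := by
        gcongr; exact Complex.norm_le_abs_re_add_abs_im _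
    _ ≤ _ := by rw [mul_add]; linarith

theorem initB {p : ℕ} {T : ℝ} {k : ℝ → ℝ → ℝ} {ψ : ℝ → ℝ} (hp : 1 ≤ p) (hT : 0 < T) (H : IsPCSF p T k ψ)
    {ε : ℝ} (hε : 0 < ε) (hK2 : 4 * KK 2 * ε ≤ 1) (hc : 32 / ε * seminorm2 ψ ≤ (fCoeff ψ 0).re) :
    Bd 2 (uof k 0) (ε / 4) := by
  have F := mkFlow hp hT H
  obtain ⟨-, -, -, -, h0, hψs, hψp, hψper, -, -⟩ := H
  have hψ : SP ψ := ⟨hψs, hψper⟩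
  have hψi : SP (fun x => (ψ x)⁻¹) := hψ.inv fun x => (hψp x).ne'
  have hpi := Real.pi_pos
  set K := (fCoeff ψ 0).re with hKd
  have hKe : fCoeff ψ 0 = (K:ℂ) := by rw [hKd, fCoeff_zero]; simp
  have hK : 0 < K := by
    rw [hKd, fCoeff_zero, Complex.ofReal_re]
    exact mul_pos (by positivity) (intervalIntegral.intervalIntegral_pos_of_pos_on
      (hψ.cont.intervalIntegrable _ _) (fun x _ => hψp x) (by positivity))
  have hε4 : ε ≤ 1 / 4 := by nlinarith [KK_one_le 2]
  have hw : SP (fun x => K⁻¹ * ψ x + (-1)) := (hψ.smul _).add (SP.const _)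
  have hy : SP (fun x => K * (ψ x)⁻¹ + (-1)) := (hψi.smul _).add (SP.const _)
  have hwB : Bd 2 (fun x => K⁻¹ * ψ x + (-1)) (ε / 16) := by
    intro n
    rw [fCoeff_add (hψ.smul _).cont (SP.const (-1)).cont, fCoeff_smul, fCoeff_const]
    by_cases hn : n = 0
    · subst hn
      have : (K:ℂ) ≠ 0 := by exact_mod_cast hK.ne'
      rw [hKe, if_pos rfl]
      push_cast
      rw [inv_mul_cancel₀ this]
      simp; positivity
    · rw [if_neg hn, add_zero, norm_mul, Complex.norm_real, Real.norm_of_nonneg (by positivity)]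
      have hj : jb n = |(n:ℝ)| := max_eq_right (by have := Int.one_le_abs hn; exact_mod_cast this)
      rw [hj, sq_abs]
      have h1 := semi_le hψ n
      have h2 : seminorm2 ψ ≤ K * ε / 32 := by
        rw [div_mul_eq_mul_div, div_le_iff₀ hε] at hc; linarith
      calc (n:ℝ)^2 * (K⁻¹ * ‖fCoeff ψ n‖) = K⁻¹ * ((n:ℝ)^2 * ‖fCoeff ψ n‖) := by ring
        _ ≤ K⁻¹ * (K * ε / 16) := by gcongr; linarith
        _ = ε / 16 := by field_simp
  have hyB := inv2 hw hy (fun x => by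
    have := (hψp x).ne'
    have := hK.ne'
    field_simp; ring) hwB (by linarith)
  set y0 := fun x => K * (ψ x)⁻¹ + (-1) with hy0
  have hR : Rof k 0 = K⁻¹ * ((fCoeff y0 0).re + 1) := by
    unfold Rof
    have e : (fun x => (k x 0)⁻¹) = fun x => K⁻¹ * (fun x => y0 x + (fun _ => (1:ℝ)) x) x := by
      ext x
      have := hK.ne'
      rw [h0, hy0]; field_simp; ring
    rw [e, fCoeff_smul, fCoeff_add hy.cont (SP.const 1).cont, fCoeff_const, if_pos rfl, Complex.re_ofReal_mul]
    simp
  have hyz : |(fCoeff y0 0).re| ≤ 1 / 2 := by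
    have := hyB 0
    simp only [jb, Int.cast_zero, abs_zero, zero_le_one, sup_of_le_left, one_pow, one_mul] at this
    refine (Complex.abs_re_le_norm _).trans (this.trans (by linarith))
  have hRp : 0 < Rof k 0 := F.Rpos 0 ⟨le_rfl, hT⟩
  have hRK : 1 / 2 ≤ Rof k 0 * K := by
    rw [hR]
    have : K⁻¹ * ((fCoeff y0 0).re + 1) * K = (fCoeff y0 0).re + 1 := by field_simp
    rw [this]; linarith [(abs_le.1 hyz).1]
  intro n
  by_cases hn : n = 0
  · subst hn; rw [F.low 0 ⟨le_rfl, hT⟩ 0 (by simp), norm_zero, mul_zero]; positivity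
  · have e : uof k 0 = fun x => (fun x => (Rof k 0 * K)⁻¹ * y0 x) x + (fun _ => ((Rof k 0 * K)⁻¹ - 1)) x := by
      ext x
      have := hK.ne'
      have := hRp.ne'
      simp only [uof, hy0, h0]
      field_simp
      ring
    rw [e, fCoeff_add (hy.smul _).cont (SP.const _).cont, fCoeff_const, if_neg hn, add_zero, fCoeff_smul, norm_mul,
      Complex.norm_real, Real.norm_of_nonneg (by positivity)]
    have h2 : (Rof k 0 * K)⁻¹ ≤ 2 := by
      rw [inv_le_comm₀ (by positivity) (by norm_num)]; linarith
    have h3 := hyB n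
    have h4 : 0 ≤ jb n ^ 2 * ‖fCoeff y0 n‖ := by positivity
    calc jb n ^ 2 * ((Rof k 0 * K)⁻¹ * ‖fCoeff y0 n‖) = (Rof k 0 * K)⁻¹ * (jb n ^ 2 * ‖fCoeff y0 n‖) := by ring
      _ ≤ 2 * (2 * (ε / 16)) := by gcongr
      _ = ε / 4 := by ring

theorem Lam_anti {p : ℕ} {T s t : ℝ} (hst : s ≤ t) (ht : t ≤ T) : Lam p T t ≤ Lam p T s := by
  unfold Lam
  have : 0 ≤ T - t := by linarith
  gcongr

theorem Lam_tOf {p : ℕ} {T τ : ℝ} (hT : 0 < T) : Lam p T (tOf p T τ) = Lam p T 0 * Real.exp (-τ) := by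
  unfold Lam tOf
  have h : T - T * (1 - Real.exp (-((p : ℝ) + 1) * τ)) = (T - 0) * Real.exp (-((p : ℝ) + 1) * τ) := by ring
  rw [h, Real.mul_rpow (by linarith) (Real.exp_pos _).le, ← Real.exp_mul]
  have : -((p:ℝ) + 1) * τ * (1 / ((p:ℝ) + 1)) = -τ := by
    have : (p:ℝ) + 1 ≠ 0 := by positivity
    field_simp
  rw [this]; ring

/-- There is a constant `c_p > 0` depending only on `p` such that if
`ψ̂(0) ≥ c_p ‖ψ‖₂`, then for every `l` there is `C_{p,l} > 0` with
`‖k̃(·,τ) - 1‖_{C^l[0,2π]} ≤ C_{p,l} e^{-(3p-1)τ}` for all `τ ≥ 0`. -/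
theorem statement0 (p : ℕ) (hp : 1 ≤ p) :
    ∃ cp > (0:ℝ), ∀ (T : ℝ), 0 < T → ∀ (k : ℝ → ℝ → ℝ) (ψ : ℝ → ℝ),
      IsPCSF p T k ψ →
      cp * seminorm2 ψ ≤ (fCoeff ψ 0).re →
      ∀ l : ℕ, ∃ C > (0:ℝ), ∀ τ : ℝ, 0 ≤ τ →
        ClNorm l (fun θ => ktilde p T k θ τ - 1)
          ≤ C * Real.exp (-(3 * (p : ℝ) - 1) * τ) := by
  obtain ⟨ε, hε, hKε, hboot⟩ := boot p
  refine ⟨32 / ε, by positivity, fun T hT k ψ H hc l => ?_⟩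
  have F := mkFlow hp hT H
  obtain ⟨t0, ht0, hb⟩ := hboot T _ _ _ F (initB hp hT H hε hKε hc)
  obtain ⟨s, hs, C, hC, hlate⟩ := late F ht0 hKε hε (fun t ht => (hb t ht).1) (fun t ht => (hb t ht).2.1)
    (fun t ht => (hb t ht).2.2) l
  have hk : JS T k := ⟨H.1, fun t _ θ => H.2.1 θ t⟩
  have hA : ∀ j : ℕ, ∃ A, 0 ≤ A ∧ ∀ t ∈ Icc 0 s, ∀ x, |iteratedDeriv j (fun x => k x t) x| ≤ A :=
    fun j => (hk.iter j).bdd hs.2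
  choose A hA0 hA using hA
  have hΛ0 := Lam_pos (T := T) (t := 0) hp hT
  have hΛs := Lam_pos (T := T) (t := s) hp hs.2
  set M : ℝ := Lam p T 0 * (∑ j ∈ Finset.range (l + 1), A j) + 1 with hM
  have hM0 : 0 < M := by
    have := Finset.sum_nonneg (s := Finset.range (l + 1)) (fun j _ => hA0 j)
    positivity
  set C' : ℝ := max C (M / Lam p T s ^ (3 * p - 1)) with hC'
  have hC'p : 0 < C' := lt_of_lt_of_le hC (le_max_left _ _)
  refine ⟨C' * Lam p T 0 ^ (3 * p - 1), by positivity, fun τ hτ => ?_⟩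
  have hE : Lam p T 0 ^ (3 * p - 1) * Real.exp (-(3 * (p : ℝ) - 1) * τ) = Lam p T (tOf p T τ) ^ (3 * p - 1) := by
    rw [Lam_tOf hT, mul_pow, ← Real.exp_nat_mul, Nat.cast_sub (by omega)]
    push_cast
    congr 2; ring
  rw [mul_assoc, hE]
  set t := tOf p T τ with ht
  have htT : t < T := by
    rw [ht, tOf]; have := Real.exp_pos (-((p : ℝ) + 1) * τ); nlinarith
  have ht0' : 0 ≤ t := by
    rw [ht, tOf]
    refine mul_nonneg hT.le (sub_nonneg.2 (Real.exp_le_one_iff.2 ?_))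
    have : 0 ≤ ((p:ℝ) + 1) * τ := by positivity
    linarith
  have hΛt := Lam_pos (T := T) (t := t) hp htT
  have hkt : (fun θ => ktilde p T k θ τ - 1) = fun θ => Lam p T t * k θ t + (-1) := by
    ext θ; unfold ktilde Lam; rw [← ht]; ring
  have main : ∀ j ≤ l, ∀ x, |iteratedDeriv j (fun θ => ktilde p T k θ τ - 1) x| ≤ C' * Lam p T t ^ (3 * p - 1) := by
    intro j hj x
    rcases le_total s t with hst | hst
    · have h1 := hlate t ⟨hst, htT⟩ j hj x
      have hR := (F.Rpos t ⟨ht0', htT⟩).ne'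
      have e : (fun x => Lam p T t * ((1 + yof k t x) / Rof k t) - 1) = fun θ => ktilde p T k θ τ - 1 := by
        rw [hkt]; ext z; unfold yof; field_simp; ring
      rw [e] at h1
      refine h1.trans ?_
      gcongr
      exact le_max_left _ _
    · have hst' : t ∈ Icc 0 s := ⟨ht0', hst⟩
      have hΛle : Lam p T t ≤ Lam p T 0 := Lam_anti ht0' htT.le
      have h1 : Lam p T t * |iteratedDeriv j (fun x => k x t) x| ≤ Lam p T 0 * (∑ j ∈ Finset.range (l + 1), A j) := by
        refine mul_le_mul hΛle ((hA j t hst' x).trans ?_) (abs_nonneg _) hΛ0.le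
        exact Finset.single_le_sum (fun j _ => hA0 j) (Finset.mem_range.2 (by omega))
      have h2 : |iteratedDeriv j (fun θ => ktilde p T k θ τ - 1) x| ≤ M := by
        rw [hkt]
        cases j with
        | zero =>
          simp only [iteratedDeriv_zero] at h1 ⊢
          refine (abs_add_le _ _).trans ?_
          rw [abs_mul, abs_of_pos hΛt, abs_neg, abs_one]
          linarith
        | succ j =>
          rw [iter_affine, abs_mul, abs_of_pos hΛt]
          linarith
      refine h2.trans ?_
      have h3 : Lam p T s ^ (3 * p - 1) ≤ Lam p T t ^ (3 * p - 1) :=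
        pow_le_pow_left₀ hΛs.le (Lam_anti hst hs.2.le) _
      calc M = M / Lam p T s ^ (3 * p - 1) * Lam p T s ^ (3 * p - 1) := by field_simp
        _ ≤ C' * Lam p T t ^ (3 * p - 1) := by
          refine mul_le_mul (le_max_right _ _) h3 (by positivity) hC'p.le
  unfold ClNorm
  have : Nonempty (Icc (0:ℝ) (2 * Real.pi)) := ⟨⟨0, le_rfl, by positivity⟩⟩
  refine ciSup_le fun j => ciSup_le fun x => main j (by have := j.2; omega) x
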